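/- arXiv:1607.05930 — 2 statements merged into one kernel-verified Lean document; each statement's English description precedes it below -/
import Mathlib

section
/- Let G be a graph on n vertices such that both G and its complement Ḡ are connected. Then pc_{1,2}(G) + pc_{1,2}(Ḡ) = n + 2 if and only if G or Ḡ is isomorphic to a double star T(n₁,n₂) for some n₁, n₂ ≥ 1. -/
open SimpleGraph

/-- A walk is *distance `ℓ`-proper* with respect to an edge-coloring `c` if any two
edges whose positions along the walk differ by at most `ℓ` receive distinct colors
(equivalently, no two edges of the same color appear with fewer than `ℓ` edges in
between on the walk). -/
def SimpleGraph.Walk.IsDistProper {V : Type*} {G : SimpleGraph V} {u v : V}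
    (ℓ : ℕ) (c : Sym2 V → ℕ) (p : G.Walk u v) : Prop :=
  ∀ (i j : ℕ) (hi : i < p.edges.length) (hj : j < p.edges.length),
    i < j → j ≤ i + ℓ → c (p.edges[i]'hi) ≠ c (p.edges[j]'hj)

/-- `c` is a `(1,ℓ)`-proper-path coloring of `G` using at most `k` colors
(the colors of edges of `G` lie in `{0, …, k-1}`): every pair of distinct vertices
is joined by a distance `ℓ`-proper path. -/
def SimpleGraph.IsPCColoring {V : Type*} (G : SimpleGraph V) (ℓ k : ℕ)
    (c : Sym2 V → ℕ) : Prop :=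
  (∀ e ∈ G.edgeSet, c e < k) ∧
  ∀ u v : V, u ≠ v → ∃ p : G.Walk u v, p.IsPath ∧ p.IsDistProper ℓ c

/-- The `(1,ℓ)`-proper connection number `pc_{1,ℓ}(G)`: the minimum number of colors
in an edge-coloring of `G` such that every pair of distinct vertices is connected by
a distance `ℓ`-proper path. -/
noncomputable def SimpleGraph.pc {V : Type*} (G : SimpleGraph V) (ℓ : ℕ) : ℕ :=
  sInf {k | ∃ c : Sym2 V → ℕ, G.IsPCColoring ℓ k c}

/-- The double star `T(n₁, n₂)`: two adjacent centers, the first with `n₁` pendant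
leaves and the second with `n₂` pendant leaves. -/
def doubleStar (n₁ n₂ : ℕ) : SimpleGraph (Fin 2 ⊕ (Fin n₁ ⊕ Fin n₂)) :=
  SimpleGraph.fromRel (fun a b =>
    (a = Sum.inl 0 ∧ b = Sum.inl 1) ∨
    (a = Sum.inl 0 ∧ ∃ i : Fin n₁, b = Sum.inr (Sum.inl i)) ∨
    (a = Sum.inl 1 ∧ ∃ j : Fin n₂, b = Sum.inr (Sum.inr j)))

/-!
If a path two-dominates `k` of the `n` vertices, i.e. `k` vertices lie on it or have two neighbors
on it, then coloring the path periodically handles these with `ℓ + 1` colors, and each further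
vertex costs at most one more color, so `pc_{1,ℓ}(G) ≤ n - k + ℓ + 1`.

A double star is a tree without paths of length four, so for `ℓ = 2` all its edges must be colored
differently, while in its complement the centers have distance three and a path of length three
two-dominates everything; this gives `(n - 1) + 3`.

Conversely, let `G` and its complement be connected. If one of them has no path of length four, it
is a double star. Otherwise take a longest path of `G`. Each vertex it does not two-dominate is
nonadjacent to all but at most one vertex of the path, which yields paths of the complement
two-dominating so much that the bounds for the two graphs add up to at most `n + 1`.
-/

/-! ### Partial colorings -/

section IsDistProper

variable {V : Type*} {G : SimpleGraph V} {ℓ : ℕ} {c c' : Sym2 V → ℕ} {u v w : V}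

theorem isDistProper_nil : (Walk.nil : G.Walk u u).IsDistProper ℓ c := by
  intro i j hi
  simp at hi

theorem isDistProper_reverse {p : G.Walk u v} (h : p.IsDistProper ℓ c) :
    p.reverse.IsDistProper ℓ c := by
  intro i j hi hj hij hjℓ
  simp only [Walk.edges_reverse, List.length_reverse, List.getElem_reverse] at hi hj ⊢
  exact (h _ _ (by omega) (by omega) (by omega) (by omega)).symm

theorem isDistProper_congr {p : G.Walk u v} (h : p.IsDistProper ℓ c)
    (hc : ∀ e ∈ p.edges, c' e = c e) : p.IsDistProper ℓ c' := by
  intro i j hi hj hij hjℓ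
  rw [hc _ (List.getElem_mem hi), hc _ (List.getElem_mem hj)]
  exact h i j hi hj hij hjℓ

theorem isDistProper_cons {p : G.Walk v w} (h : p.IsDistProper ℓ c) (huv : G.Adj u v)
    (hc : ∀ e ∈ p.edges, c e ≠ c s(u, v)) : (Walk.cons huv p).IsDistProper ℓ c := by
  rintro (_ | i) (_ | j) hi hj hij hjℓ
  · omega
  · exact (hc _ (List.getElem_mem _)).symm
  · omega
  · exact h i j _ _ (by omega) (by omega)

end IsDistProper

/-- `c` makes every two vertices of `S` joined by a distance `ℓ`-proper path *inside `S`*, using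
colors below `k` only. Such a partial coloring can be extended one vertex at a time. -/
structure IsPCColoringOn {V : Type*} (G : SimpleGraph V) (ℓ k : ℕ) (c : Sym2 V → ℕ)
    (S : Set V) : Prop where
  lt : ∀ e, c e < k
  exists_path : ∀ u ∈ S, ∀ v ∈ S,
    ∃ p : G.Walk u v, p.IsPath ∧ p.IsDistProper ℓ c ∧ ∀ z ∈ p.support, z ∈ S

namespace IsPCColoringOn

variable {V : Type*} {G : SimpleGraph V} {ℓ k : ℕ} {c : Sym2 V → ℕ} {S : Set V}

theorem exists_insert (h : IsPCColoringOn G ℓ k c S) {v s : V} (hv : v ∉ S) (hs : s ∈ S)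
    (hvs : G.Adj v s) : ∃ c', IsPCColoringOn G ℓ (k + 1) c' (insert v S) := by
  classical
  set c' := Function.update c s(v, s) k
  have agree {a b : V} (p : G.Walk a b) (hp : ∀ z ∈ p.support, z ∈ S) :
      ∀ e ∈ p.edges, c' e = c e := by
    refine fun e he => Function.update_of_ne ?_ _ _
    rintro rfl
    exact hv (hp _ (p.fst_mem_support_of_mem_edges he))
  have path_from_v : ∀ b ∈ S, ∃ p : G.Walk v b, p.IsPath ∧ p.IsDistProper ℓ c' ∧
      ∀ z ∈ p.support, z ∈ insert v S := by
    intro b hb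
    obtain ⟨p, hp, hproper, hsupp⟩ := h.exists_path s hs b hb
    refine ⟨.cons hvs p, hp.cons fun hvp => hv (hsupp v hvp),
      isDistProper_cons (isDistProper_congr hproper (agree p hsupp)) hvs fun e he => ?_,
      fun z hz => ?_⟩
    · rw [agree p hsupp e he, show c' s(v, s) = k from Function.update_self ..]
      exact (h.lt e).ne
    · exact (List.mem_cons.1 hz).imp_right (hsupp z)
  refine ⟨c', ⟨fun e => ?_, ?_⟩⟩
  · rcases eq_or_ne e s(v, s) with rfl | he
    · simp [c']
    · simpa [c', he] using (h.lt e).trans k.lt_succ_self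
  · rintro a (rfl | ha) b (rfl | hb)
    · exact ⟨.nil, by simp, isDistProper_nil, by simp⟩
    · exact path_from_v b hb
    · obtain ⟨p, hp, hproper, hsupp⟩ := path_from_v a ha
      exact ⟨p.reverse, hp.reverse, isDistProper_reverse hproper, by simpa using hsupp⟩
    · obtain ⟨p, hp, hproper, hsupp⟩ := h.exists_path a ha b hb
      exact ⟨p, hp, isDistProper_congr hproper (agree p hsupp), fun z hz => Or.inr (hsupp z hz)⟩

theorem isPCColoring (h : IsPCColoringOn G ℓ k c Set.univ) : G.IsPCColoring ℓ k c := by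
  refine ⟨fun e _ => h.lt e, fun u v _ => ?_⟩
  obtain ⟨p, hp, hproper, -⟩ := h.exists_path u trivial v trivial
  exact ⟨p, hp, hproper⟩

theorem exists_isPCColoring [Finite V] (hG : G.Preconnected) (h : IsPCColoringOn G ℓ k c S)
    (hS : S.Nonempty) : ∃ c', G.IsPCColoring ℓ (k + Sᶜ.ncard) c' := by
  induction hn : Sᶜ.ncard generalizing S k c with
  | zero =>
    rw [Set.ncard_eq_zero, Set.compl_empty_iff] at hn
    subst hn
    exact ⟨c, h.isPCColoring⟩
  | succ n ih =>
    obtain ⟨s, hs⟩ := hS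
    obtain ⟨t, ht⟩ := Set.nonempty_of_ncard_ne_zero (s := Sᶜ) (by omega)
    obtain ⟨p⟩ := hG s t
    obtain ⟨d, -, hd, hd'⟩ := p.exists_boundary_dart S hs ht
    obtain ⟨c', hc'⟩ := h.exists_insert hd' hd d.adj.symm
    obtain ⟨c'', hc''⟩ := ih hc' (Set.insert_nonempty _ _) <| by
      rw [Set.insert_eq, Set.compl_union, Set.inter_comm, ← Set.sdiff_eq,
        Set.ncard_sdiff_singleton_of_mem hd', hn, Nat.add_sub_cancel]
    exact ⟨c'', by rwa [Nat.add_right_comm] at hc''⟩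

end IsPCColoringOn

theorem pc_le {V : Type*} {G : SimpleGraph V} {ℓ k : ℕ} {c : Sym2 V → ℕ}
    (hc : G.IsPCColoring ℓ k c) : G.pc ℓ ≤ k :=
  Nat.sInf_le ⟨c, hc⟩

theorem exists_isPCColoring_pc {V : Type*} [Finite V] {G : SimpleGraph V} (hG : G.Connected)
    (ℓ : ℕ) : ∃ c, G.IsPCColoring ℓ (G.pc ℓ) c := by
  obtain ⟨v⟩ := hG.nonempty
  have h : IsPCColoringOn G ℓ 1 0 {v} :=
    ⟨fun _ => zero_lt_one, by
      rintro u rfl w rfl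
      exact ⟨.nil, by simp, isDistProper_nil, by simp⟩⟩
  exact Nat.sInf_mem
    (s := {k | ∃ c, G.IsPCColoring ℓ k c}) ⟨_, h.exists_isPCColoring hG.preconnected ⟨v, rfl⟩⟩

theorem pc_eq_zero_of_subsingleton {V : Type*} [Subsingleton V] (G : SimpleGraph V) (ℓ : ℕ) :
    G.pc ℓ = 0 :=
  Nat.le_zero.1 <| pc_le (c := 0)
    ⟨fun e => e.ind fun u v huv => (G.ne_of_adj huv (Subsingleton.elim u v)).elim,
      fun u v huv => (huv (Subsingleton.elim u v)).elim⟩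

/-! ### Periodically colored paths -/

/-- The edges of `p` are colored `s, s + 1, s + 2, …` modulo `ℓ + 1`. -/
def IsRun {V : Type*} {G : SimpleGraph V} {u v : V} (ℓ : ℕ) (c : Sym2 V → ℕ) (s : ℕ)
    (p : G.Walk u v) : Prop :=
  ∀ (t : ℕ) (ht : t < p.edges.length), c p.edges[t] = (s + t) % (ℓ + 1)

namespace IsRun

variable {V : Type*} {G : SimpleGraph V} {ℓ s : ℕ} {c : Sym2 V → ℕ} {u v w : V}

theorem nil : IsRun ℓ c s (Walk.nil : G.Walk u u) := by
  intro t ht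
  simp at ht

theorem cons {p : G.Walk v w} (h : IsRun ℓ c (s + 1) p) (huv : G.Adj u v)
    (hc : c s(u, v) = s % (ℓ + 1)) : IsRun ℓ c s (Walk.cons huv p) := by
  rintro (_ | t) ht
  · exact hc
  · exact (h t _).trans (by rw [Nat.add_assoc, Nat.add_comm 1])

theorem add_period {p : G.Walk u v} (h : IsRun ℓ c s p) : IsRun ℓ c (s + ℓ + 1) p := by
  intro t ht
  rw [h t ht, Nat.add_assoc s, Nat.add_right_comm, Nat.add_mod_right]

theorem isDistProper {p : G.Walk u v} (h : IsRun ℓ c s p) : p.IsDistProper ℓ c := by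
  intro i j hi hj hij hjℓ heq
  rw [h i hi, h j hj] at heq
  have hmod : i ≡ j [MOD ℓ + 1] := Nat.ModEq.add_left_cancel' s heq
  have := (Nat.modEq_iff_dvd' hij.le).1 hmod
  exact absurd (Nat.le_of_dvd (by omega) this) (by omega)

end IsRun

/-- The vertices of the path `p` together with the vertices having two neighbors on `p`: the
vertices that can be joined to each other properly by coloring `p` periodically. -/
def twoDominated {V : Type*} {G : SimpleGraph V} {a b : V} (p : G.Walk a b) : Set V :=
  {v | v ∈ p.support ∨ ∃ x ∈ p.support, ∃ y ∈ p.support, x ≠ y ∧ G.Adj v x ∧ G.Adj v y}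

/-- `c` colors the edges of the path `p` by `0, 1, 2, …` modulo `ℓ + 1`, and each two-dominated
vertex off `p` has two neighbors `p.getVert i`, `p.getVert j`, `i < j`, such that `p` can be entered
at `i` and left at `j` without disturbing this pattern. -/
structure IsPeriodicColoring {V : Type*} {G : SimpleGraph V} {a b : V} (ℓ : ℕ) (c : Sym2 V → ℕ)
    (p : G.Walk a b) : Prop where
  lt : ∀ e, c e < ℓ + 1
  edge : ∀ i < p.length, c s(p.getVert i, p.getVert (i + 1)) = i % (ℓ + 1)
  side : ∀ v ∈ twoDominated p, v ∉ p.support → ∃ i j, i < j ∧ j ≤ p.length ∧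
    G.Adj v (p.getVert i) ∧ c s(v, p.getVert i) = (i + ℓ) % (ℓ + 1) ∧
    G.Adj v (p.getVert j) ∧ c s(v, p.getVert j) = j % (ℓ + 1)

section PathBound

variable {V : Type*} {G : SimpleGraph V} {a b : V} {p : G.Walk a b} {ℓ : ℕ} {c : Sym2 V → ℕ}

theorem exists_lt_getVert_adj_of_mem_twoDominated {v : V} (hv : v ∈ twoDominated p)
    (hvp : v ∉ p.support) : ∃ i j, i < j ∧ j ≤ p.length ∧
      G.Adj v (p.getVert i) ∧ G.Adj v (p.getVert j) := by
  obtain ⟨x, hx, y, hy, hxy, hvx, hvy⟩ := hv.resolve_left hvp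
  obtain ⟨i, rfl, hi⟩ := Walk.mem_support_iff_exists_getVert.1 hx
  obtain ⟨j, rfl, hj⟩ := Walk.mem_support_iff_exists_getVert.1 hy
  rcases lt_trichotomy i j with hij | rfl | hij
  · exact ⟨i, j, hij, hj, hvx, hvy⟩
  · exact absurd rfl hxy
  · exact ⟨j, i, hij, hi, hvy, hvx⟩

theorem exists_isPeriodicColoring (hp : p.IsPath) (ℓ : ℕ) : ∃ c, IsPeriodicColoring ℓ c p := by
  classical
  choose! lo hi hlt hle hlo hhi using
    fun v hv hvp => exists_lt_getVert_adj_of_mem_twoDominated (p := p) (v := v) hv hvp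
  have inj : ∀ {i j}, i ≤ p.length → j ≤ p.length → p.getVert i = p.getVert j → i = j :=
    fun hi hj h => hp.getVert_injOn hi hj h
  -- On an edge from a vertex `v` off `p` to `p`, the minimum picks out the index of the end on `p`.
  let idx (v : V) : ℕ := p.support.idxOf v
  have idx_off {v} (hv : v ∉ p.support) : idx v = p.length + 1 := by
    rw [← Walk.length_support, ← List.idxOf_eq_length_iff.2 hv]
  have idx_getVert {i} (hi : i ≤ p.length) : idx (p.getVert i) = i := by
    simp only [idx, Walk.getVert_eq_support_getElem p hi]
    exact hp.support_nodup.idxOf_getElem i _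
  let exitsTo (u v : V) : Prop := u ∉ p.support ∧ v = p.getVert (lo u)
  let color (u v : V) : ℕ :=
    (min (idx u) (idx v) + if exitsTo u v ∨ exitsTo v u then ℓ else 0) % (ℓ + 1)
  refine ⟨Sym2.lift ⟨color, fun u v => by simp only [color, min_comm, or_comm]⟩, ⟨?_, ?_, ?_⟩⟩
  · exact Sym2.ind fun u v => Nat.mod_lt _ ℓ.succ_pos
  · intro i hi
    simp [color, exitsTo, idx_getVert hi.le, idx_getVert (Nat.succ_le_of_lt hi)]
  · intro v hv hvp
    refine ⟨lo v, hi v, hlt v hv hvp, hle v hv hvp, hlo v hv hvp, ?_, hhi v hv hvp, ?_⟩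
    · have hlo_le : lo v ≤ p.length := (hlt v hv hvp).le.trans (hle v hv hvp)
      simp [color, exitsTo, hvp, idx_off hvp, idx_getVert hlo_le, hlo_le.trans (Nat.le_succ _)]
    · have hne : p.getVert (hi v) ≠ p.getVert (lo v) := fun h => (hlt v hv hvp).ne'
        (inj (hle v hv hvp) ((hlt v hv hvp).le.trans (hle v hv hvp)) h)
      simp [color, exitsTo, hvp, hne, idx_off hvp, idx_getVert (hle v hv hvp),
        (hle v hv hvp).trans (Nat.le_succ _)]

theorem IsPeriodicColoring.exists_run_of_le (hc : IsPeriodicColoring ℓ c p) (hp : p.IsPath)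
    {v : V} {i j : ℕ} (hij : i ≤ j) (hj : j ≤ p.length)
    (hv : v = p.getVert j ∨
      v ∉ p.support ∧ G.Adj v (p.getVert j) ∧ c s(v, p.getVert j) = j % (ℓ + 1)) :
    ∃ q : G.Walk (p.getVert i) v, q.IsPath ∧ IsRun ℓ c i q ∧
      ∀ z ∈ q.support, z = v ∨ ∃ k, i ≤ k ∧ k ≤ p.length ∧ z = p.getVert k := by
  induction hij using Nat.decreasingInduction with
  | self =>
    rcases hv with rfl | ⟨hvp, hadj, hcol⟩
    · exact ⟨.nil, by simp, IsRun.nil, by simp⟩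
    · refine ⟨.cons hadj.symm .nil, ?_, IsRun.nil.cons _ (by rwa [Sym2.eq_swap]), ?_⟩
      · simpa using hadj.ne'
      · rintro z hz
        obtain rfl | rfl : z = p.getVert j ∨ z = v := by simpa using hz
        exacts [Or.inr ⟨j, le_rfl, hj, rfl⟩, Or.inl rfl]
  | of_succ i hij ih =>
    obtain ⟨q, hq, hrun, hsupp⟩ := ih
    have hne : p.getVert i ≠ v := by
      rintro rfl
      rcases hv with hv | ⟨hvp, -⟩
      · exact hij.ne (hp.getVert_injOn (hij.le.trans hj : i ≤ p.length) hj hv)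
      · exact hvp (p.getVert_mem_support i)
    refine ⟨.cons (p.adj_getVert_succ (by omega)) q, hq.cons fun hmem => ?_,
      hrun.cons _ (hc.edge i (by omega)), fun z hz => ?_⟩
    · obtain ⟨k, hik, hk, heq⟩ := (hsupp _ hmem).resolve_left hne
      have := hp.getVert_injOn (by omega : i ≤ p.length) hk heq
      omega
    · rcases List.mem_cons.1 hz with rfl | hz
      · exact Or.inr ⟨i, le_rfl, by omega, rfl⟩
      · exact (hsupp z hz).imp_right fun ⟨k, hik, hk⟩ => ⟨k, by omega, hk⟩

/-- In the pattern of `c`, the vertex `v` is left towards `p` at index `i` and reached from `p` at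
index `j`; a vertex of `p` is its own entry and exit. -/
def IsAttached (ℓ : ℕ) (c : Sym2 V → ℕ) (p : G.Walk a b) (v : V) (i j : ℕ) : Prop :=
  i ≤ j ∧ j ≤ p.length ∧
    (v = p.getVert i ∨ v ∉ p.support ∧ G.Adj v (p.getVert i) ∧
      c s(v, p.getVert i) = (i + ℓ) % (ℓ + 1)) ∧
    (v = p.getVert j ∨ v ∉ p.support ∧ G.Adj v (p.getVert j) ∧
      c s(v, p.getVert j) = j % (ℓ + 1))

theorem IsPeriodicColoring.exists_isAttached (hc : IsPeriodicColoring ℓ c p) {v : V}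
    (hv : v ∈ twoDominated p) : ∃ i j, IsAttached ℓ c p v i j := by
  by_cases hvp : v ∈ p.support
  · obtain ⟨i, rfl, hi⟩ := Walk.mem_support_iff_exists_getVert.1 hvp
    exact ⟨i, i, le_rfl, hi, Or.inl rfl, Or.inl rfl⟩
  · obtain ⟨i, j, hij, hj, hvi, hci, hvj, hcj⟩ := hc.side v hv hvp
    exact ⟨i, j, hij.le, hj, Or.inr ⟨hvp, hvi, hci⟩, Or.inr ⟨hvp, hvj, hcj⟩⟩

theorem IsPeriodicColoring.exists_path_of_isAttached (hc : IsPeriodicColoring ℓ c p)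
    (hp : p.IsPath) {u v : V} (huv : u ≠ v) {i j i' j' : ℕ} (hu : IsAttached ℓ c p u i j)
    (hv : IsAttached ℓ c p v i' j') (hij : i ≤ j') :
    ∃ q : G.Walk u v, q.IsPath ∧ q.IsDistProper ℓ c ∧
      ∀ z ∈ q.support, z = u ∨ z = v ∨ z ∈ p.support := by
  obtain ⟨q, hq, hrun, hsupp⟩ := hc.exists_run_of_le hp hij hv.2.1 hv.2.2.2
  have hsupp' : ∀ z ∈ q.support, z = v ∨ z ∈ p.support := fun z hz =>
    (hsupp z hz).imp_right fun ⟨k, _, _, hk⟩ => hk ▸ p.getVert_mem_support k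
  rcases hu.2.2.1 with rfl | ⟨hup, hadj, hcol⟩
  · exact ⟨q, hq, hrun.isDistProper, fun z hz => Or.inr (hsupp' z hz)⟩
  · refine ⟨.cons hadj q, hq.cons fun h => (hsupp' u h).elim huv hup,
      (hrun.add_period.cons hadj hcol).isDistProper, fun z hz => ?_⟩
    exact (List.mem_cons.1 hz).imp_right (hsupp' z)

theorem IsPeriodicColoring.isPCColoringOn (hc : IsPeriodicColoring ℓ c p) (hp : p.IsPath) :
    IsPCColoringOn G ℓ (ℓ + 1) c (twoDominated p) := by
  refine ⟨hc.lt, fun u hu v hv => ?_⟩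
  rcases eq_or_ne u v with rfl | huv
  · exact ⟨.nil, by simp, isDistProper_nil, by simpa using hu⟩
  obtain ⟨i, j, hui⟩ := hc.exists_isAttached hu
  obtain ⟨i', j', hvi⟩ := hc.exists_isAttached hv
  rcases le_or_gt i j' with hij | hij
  · obtain ⟨q, hq, hproper, hsupp⟩ := hc.exists_path_of_isAttached hp huv hui hvi hij
    refine ⟨q, hq, hproper, fun z hz => ?_⟩
    rcases hsupp z hz with rfl | rfl | hz
    exacts [hu, hv, Or.inl hz]
  · obtain ⟨q, hq, hproper, hsupp⟩ := hc.exists_path_of_isAttached hp huv.symm hvi hui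
      ((hvi.1.trans hij.le).trans hui.1)
    refine ⟨q.reverse, hq.reverse, isDistProper_reverse hproper, fun z hz => ?_⟩
    rcases hsupp z (by simpa using hz) with rfl | rfl | hz
    exacts [hv, hu, Or.inl hz]

theorem pc_add_ncard_twoDominated_le [Fintype V] (hG : G.Connected) (hp : p.IsPath) (ℓ : ℕ) :
    G.pc ℓ + (twoDominated p).ncard ≤ Fintype.card V + (ℓ + 1) := by
  obtain ⟨c, hc⟩ := exists_isPeriodicColoring hp ℓ
  obtain ⟨c', hc'⟩ := (hc.isPCColoringOn hp).exists_isPCColoring hG.preconnected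
    ⟨a, Or.inl p.start_mem_support⟩
  have := pc_le hc'
  have := Set.ncard_add_ncard_compl (twoDominated p)
  rw [Nat.card_eq_fintype_card] at this
  omega

end PathBound

/-- Some path of `G` two-dominates at least `k` vertices. -/
def PathDominates {V : Type*} (G : SimpleGraph V) (k : ℕ) : Prop :=
  ∃ (a b : V) (p : G.Walk a b), p.IsPath ∧ k ≤ (twoDominated p).ncard

namespace PathDominates

variable {V : Type*} {G : SimpleGraph V} {k : ℕ}

theorem pc_add_le [Fintype V] (h : PathDominates G k) (hG : G.Connected) (ℓ : ℕ) :
    G.pc ℓ + k ≤ Fintype.card V + (ℓ + 1) := by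
  obtain ⟨a, b, p, hp, hk⟩ := h
  exact (Nat.add_le_add_left hk _).trans (pc_add_ncard_twoDominated_le hG hp ℓ)

theorem mono {k' : ℕ} (h : PathDominates G k) (hk : k' ≤ k) : PathDominates G k' :=
  let ⟨a, b, p, hp, hk'⟩ := h
  ⟨a, b, p, hp, hk.trans hk'⟩

theorem of_subset [Finite V] {a b : V} {p : G.Walk a b} (hp : p.IsPath) {S : Set V}
    (hS : S ⊆ twoDominated p) : PathDominates G S.ncard :=
  ⟨a, b, p, hp, Set.ncard_le_ncard hS⟩

theorem of_isChain [Finite V] {l : List V} (hne : l ≠ []) (hl : l.IsChain G.Adj)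
    (hnodup : l.Nodup) {S : Set V}
    (hS : ∀ v ∈ S, v ∈ l ∨ ∃ x ∈ l, ∃ y ∈ l, x ≠ y ∧ G.Adj v x ∧ G.Adj v y) :
    PathDominates G S.ncard := by
  refine of_subset (p := Walk.ofSupport l hne hl) ?_ fun v hv => ?_
  · rwa [Walk.isPath_def, Walk.support_ofSupport]
  · simpa only [twoDominated, Set.mem_ofPred_eq, Walk.support_ofSupport] using hS v hv

theorem of_isChain_append [Finite V] {l l' : List V} (hne : l ≠ []) (hl : l.IsChain G.Adj)
    (hnodup : (l ++ l').Nodup)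
    (hl' : ∀ v ∈ l', ∃ x ∈ l, ∃ y ∈ l, x ≠ y ∧ G.Adj v x ∧ G.Adj v y) :
    PathDominates G (l ++ l').length := by
  classical
  rw [← List.toFinset_card_of_nodup hnodup, ← Set.ncard_coe_finset]
  refine of_isChain hne hl hnodup.of_append_left fun v hv => ?_
  rw [Finset.mem_coe, List.mem_toFinset, List.mem_append] at hv
  exact hv.imp_right (hl' v)

theorem of_isPath [Finite V] {a b : V} {p : G.Walk a b} (hp : p.IsPath) :
    PathDominates G (p.length + 1) := by
  rw [← Walk.length_support, ← List.append_nil p.support]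
  exact of_isChain_append p.support_ne_nil p.isChain_adj_support (by simpa using hp.support_nodup)
    (by simp)

end PathDominates

/-! ### Lower bounds -/

/-- Every path of `G` has at most `k` edges. -/
def PathLengthLE {V : Type*} (G : SimpleGraph V) (k : ℕ) : Prop :=
  ∀ ⦃a b : V⦄ (p : G.Walk a b), p.IsPath → p.length ≤ k

section LowerBounds

variable {V : Type*} {G : SimpleGraph V} {ℓ : ℕ}

theorem nodup_map_take_edges {c : Sym2 V → ℕ} {u v : V} {p : G.Walk u v}
    (hp : p.IsDistProper ℓ c) : ((p.edges.take (ℓ + 1)).map c).Nodup := by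
  rw [List.nodup_iff_pairwise_ne, List.pairwise_iff_getElem]
  intro i j hi hj hij
  simp only [List.length_map, List.length_take] at hi hj
  simp only [List.getElem_map, List.getElem_take]
  exact hp i j (by omega) (by omega) hij (by omega)

theorem min_dist_le_pc [Finite V] (hG : G.Connected) (u v : V) (ℓ : ℕ) :
    min (ℓ + 1) (G.dist u v) ≤ G.pc ℓ := by
  rcases eq_or_ne u v with rfl | huv
  · simp
  obtain ⟨c, hlt, hpath⟩ := exists_isPCColoring_pc hG ℓ
  obtain ⟨p, -, hp⟩ := hpath u v huv
  have hcolors : (p.edges.take (ℓ + 1)).map c ⊆ List.range (G.pc ℓ) := by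
    intro k hk
    obtain ⟨e, he, rfl⟩ := List.mem_map.1 hk
    exact List.mem_range.2 (hlt e (p.edges_subset_edgeSet (List.mem_of_mem_take he)))
  calc min (ℓ + 1) (G.dist u v) ≤ min (ℓ + 1) p.length := min_le_min_left _ (dist_le p)
    _ = ((p.edges.take (ℓ + 1)).map c).length := by simp
    _ ≤ (List.range (G.pc ℓ)).length := ((nodup_map_take_edges hp).subperm hcolors).length_le
    _ = G.pc ℓ := List.length_range

theorem exists_isPath_extending_to_edge (hG : G.IsAcyclic) {u v x : V} {p : G.Walk v x}
    (hp : p.IsPath) (huv : G.Adj u v) :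
    ∃ (w : V) (q : G.Walk w x), q.IsPath ∧ s(u, v) ∈ q.edges ∧ p.edges ⊆ q.edges := by
  by_cases hu : u ∈ p.support
  · refine ⟨v, p, hp, ?_, List.Subset.refl _⟩
    rw [hG.eq_snd_of_adj_start hp huv.symm hu, Sym2.eq_swap]
    refine p.mk_start_snd_mem_edges fun hnil => huv.ne ?_
    simpa [Walk.nil_iff_support_eq.1 hnil] using hu
  · exact ⟨u, .cons huv p, hp.cons hu, by simp, by simp⟩

theorem exists_isPath_of_mem_edgeSet (hG : G.IsTree) {e f : Sym2 V} (he : e ∈ G.edgeSet)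
    (hf : f ∈ G.edgeSet) :
    ∃ (a b : V) (p : G.Walk a b), p.IsPath ∧ e ∈ p.edges ∧ f ∈ p.edges := by
  induction e with | _ u v
  induction f with | _ x y
  obtain ⟨p, hp⟩ := hG.connected.exists_isPath v x
  obtain ⟨a, q, hq, heq, -⟩ := exists_isPath_extending_to_edge hG.isAcyclic hp he
  obtain ⟨b, r, hr, hfr, hqr⟩ := exists_isPath_extending_to_edge hG.isAcyclic hq.reverse hf.symm
  exact ⟨b, a, r, hr, hqr (by simpa using heq), by rwa [Sym2.eq_swap]⟩

theorem injOn_of_isTree {k : ℕ} {c : Sym2 V → ℕ} (hG : G.IsTree) (hlen : PathLengthLE G (ℓ + 1))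
    (hc : G.IsPCColoring ℓ k c) : Set.InjOn c G.edgeSet := by
  intro e he f hf hef
  obtain ⟨a, b, p, hp, hep, hfp⟩ := exists_isPath_of_mem_edgeSet hG he hf
  have hab : a ≠ b := by
    rintro rfl
    simp [Walk.edges_eq_nil.2 (Walk.isPath_iff_nil.1 hp)] at hep
  obtain ⟨q, hq, hproper⟩ := hc.2 a b hab
  obtain rfl : p = q := (hG.existsUnique_path a b).unique hp hq
  have hnodup := nodup_map_take_edges hproper
  rw [List.take_of_length_le (by simpa using hlen p hp)] at hnodup
  exact List.inj_on_of_nodup_map hnodup hep hfp hef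

theorem card_le_pc_add_one_of_isTree [Fintype V] (hG : G.IsTree) (hlen : PathLengthLE G (ℓ + 1)) :
    Fintype.card V ≤ G.pc ℓ + 1 := by
  classical
  obtain ⟨c, hc⟩ := exists_isPCColoring_pc hG.connected ℓ
  rw [← hG.card_edgeFinset, ← Finset.card_range (G.pc ℓ)]
  refine Nat.succ_le_succ (Finset.card_le_card_of_injOn c ?_ ?_)
  · intro e he
    simpa using hc.1 e (mem_edgeFinset.1 he)
  · simpa using injOn_of_isTree hG hlen hc

end LowerBounds

/-! ### Double stars -/

/-- The pendant vertices of `G` whose only neighbor is `u`. -/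
def leavesAt {V : Type*} (G : SimpleGraph V) (u : V) : Set V :=
  {x | ∀ y, G.Adj x y ↔ y = u}

/-- `G` is a double star with centers `u` and `v`. Requiring that the centers are not leaves amounts
to each of them having a leaf. -/
structure IsDoubleStar {V : Type*} (G : SimpleGraph V) (u v : V) : Prop where
  adj : G.Adj u v
  left_notMem : u ∉ leavesAt G v
  right_notMem : v ∉ leavesAt G u
  mem_leavesAt : ∀ x, x ≠ u → x ≠ v → x ∈ leavesAt G u ∨ x ∈ leavesAt G v

theorem notMem_leavesAt_of_adj {V : Type*} {G : SimpleGraph V} {u x y z : V} (hy : G.Adj x y)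
    (hz : G.Adj x z) (hyz : y ≠ z) : x ∉ leavesAt G u :=
  fun hx => hyz (((hx y).1 hy).trans ((hx z).1 hz).symm)

theorem isDoubleStar_doubleStar {n₁ n₂ : ℕ} (h₁ : 1 ≤ n₁) (h₂ : 1 ≤ n₂) :
    IsDoubleStar (doubleStar n₁ n₂) (Sum.inl 0) (Sum.inl 1) where
  adj := by simp [doubleStar]
  left_notMem := notMem_leavesAt_of_adj (y := Sum.inl 1) (z := Sum.inr (Sum.inl ⟨0, h₁⟩))
    (by simp [doubleStar]) (by simp [doubleStar]) (by simp)
  right_notMem := notMem_leavesAt_of_adj (y := Sum.inl 0) (z := Sum.inr (Sum.inr ⟨0, h₂⟩))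
    (by simp [doubleStar]) (by simp [doubleStar]) (by simp)
  mem_leavesAt := by
    rintro (i | i | i) h₀ h₁
    · fin_cases i <;> contradiction
    · exact Or.inl (by rintro (j | j | j) <;> simp [doubleStar])
    · exact Or.inr (by rintro (j | j | j) <;> simp [doubleStar])

namespace IsDoubleStar

variable {V W : Type*} {G : SimpleGraph V} {G' : SimpleGraph W} {u v : V}

theorem symm (h : IsDoubleStar G u v) : IsDoubleStar G v u where
  adj := h.adj.symm
  left_notMem := h.right_notMem
  right_notMem := h.left_notMem
  mem_leavesAt x hv hu := (h.mem_leavesAt x hu hv).symm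

theorem map_iso (h : IsDoubleStar G u v) (e : G ≃g G') : IsDoubleStar G' (e u) (e v) := by
  have mem_iff (x w : V) : e x ∈ leavesAt G' (e w) ↔ x ∈ leavesAt G w := by
    simp only [leavesAt, Set.mem_ofPred_eq, e.surjective.forall, e.map_adj_iff, e.injective.eq_iff]
  refine ⟨e.map_adj_iff.2 h.adj, by rw [mem_iff]; exact h.left_notMem,
    by rw [mem_iff]; exact h.right_notMem, e.surjective.forall.2 fun x hu hv => ?_⟩
  simp only [mem_iff]
  exact h.mem_leavesAt x (ne_of_apply_ne e hu) (ne_of_apply_ne e hv)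

theorem nonempty_leavesAt_left (h : IsDoubleStar G u v) : (leavesAt G u).Nonempty := by
  by_contra hempty
  refine h.left_notMem fun y => ⟨fun huy => by_contra fun hyv => ?_, fun hy => hy ▸ h.adj⟩
  rcases h.mem_leavesAt y huy.ne' hyv with hy | hy
  · exact hempty ⟨y, hy⟩
  · exact h.adj.ne ((hy u).1 huy.symm)

theorem nonempty_leavesAt_right (h : IsDoubleStar G u v) : (leavesAt G v).Nonempty :=
  h.symm.nonempty_leavesAt_left

theorem left_notMem_left (h : IsDoubleStar G u v) : u ∉ leavesAt G u :=
  fun hu => h.adj.ne' ((hu v).1 h.adj)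

theorem disjoint_leavesAt (h : IsDoubleStar G u v) : Disjoint (leavesAt G u) (leavesAt G v) :=
  Set.disjoint_left.2 fun _ hu hv => h.adj.ne ((hv u).1 ((hu u).2 rfl))

section Iso

/-- The map naming the vertices of a double star with centers `u` and `v` by those of `doubleStar`,
given enumerations of the leaves. -/
def labelling {n₁ n₂ : ℕ} {L₁ L₂ : Set V} (u v : V) (f₁ : Fin n₁ ≃ L₁) (f₂ : Fin n₂ ≃ L₂) :
    Fin 2 ⊕ (Fin n₁ ⊕ Fin n₂) → V :=
  Sum.elim ![u, v] (Sum.elim (fun i => f₁ i) (fun j => f₂ j))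

variable {n₁ n₂ : ℕ} (f₁ : Fin n₁ ≃ leavesAt G u) (f₂ : Fin n₂ ≃ leavesAt G v)

theorem bijective_labelling (h : IsDoubleStar G u v) :
    Function.Bijective (labelling u v f₁ f₂) := by
  constructor
  · refine Function.Injective.sumElim ?_
      ((Subtype.val_injective.comp f₁.injective).sumElim
        (Subtype.val_injective.comp f₂.injective) fun i j =>
          h.disjoint_leavesAt.ne_of_mem (f₁ i).2 (f₂ j).2) ?_
    · simp [Function.Injective, Fin.forall_fin_two, h.adj.ne, h.adj.ne']
    · rintro i (j | j)
      · fin_cases i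
        · exact (ne_of_mem_of_not_mem (f₁ j).2 h.left_notMem_left).symm
        · exact (ne_of_mem_of_not_mem (f₁ j).2 h.right_notMem).symm
      · fin_cases i
        · exact (ne_of_mem_of_not_mem (f₂ j).2 h.left_notMem).symm
        · exact (ne_of_mem_of_not_mem (f₂ j).2 h.symm.left_notMem_left).symm
  · intro x
    by_cases hu : x = u
    · exact ⟨Sum.inl 0, hu.symm⟩
    by_cases hv : x = v
    · exact ⟨Sum.inl 1, hv.symm⟩
    rcases h.mem_leavesAt x hu hv with hx | hx
    · exact ⟨Sum.inr (Sum.inl (f₁.symm ⟨x, hx⟩)), by simp [labelling]⟩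
    · exact ⟨Sum.inr (Sum.inr (f₂.symm ⟨x, hx⟩)), by simp [labelling]⟩

theorem adj_labelling_iff (h : IsDoubleStar G u v) (p q : Fin 2 ⊕ (Fin n₁ ⊕ Fin n₂)) :
    G.Adj (labelling u v f₁ f₂ p) (labelling u v f₁ f₂ q) ↔ (doubleStar n₁ n₂).Adj p q := by
  have adj₁ (i y) : G.Adj (f₁ i) y ↔ y = u := (f₁ i).2 y
  have adj₂ (j y) : G.Adj (f₂ j) y ↔ y = v := (f₂ j).2 y
  have adj₁' (i y) : G.Adj y (f₁ i) ↔ y = u := (G.adj_comm _ _).trans (adj₁ i y)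
  have adj₂' (j y) : G.Adj y (f₂ j) ↔ y = v := (G.adj_comm _ _).trans (adj₂ j y)
  have ne₁ (i) : (f₁ i : V) ≠ u ∧ (f₁ i : V) ≠ v :=
    ⟨ne_of_mem_of_not_mem (f₁ i).2 h.left_notMem_left,
      ne_of_mem_of_not_mem (f₁ i).2 h.right_notMem⟩
  have ne₂ (j) : (f₂ j : V) ≠ u ∧ (f₂ j : V) ≠ v :=
    ⟨ne_of_mem_of_not_mem (f₂ j).2 h.left_notMem,
      ne_of_mem_of_not_mem (f₂ j).2 h.symm.left_notMem_left⟩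
  have hadj := h.adj
  rcases p with p | p | p <;> rcases q with q | q | q <;>
    (try fin_cases p) <;> (try fin_cases q) <;>
    simp [labelling, doubleStar, *, hadj.symm, hadj.ne, hadj.ne']

theorem exists_iso_doubleStar [Finite V] (h : IsDoubleStar G u v) :
    ∃ n₁ n₂, 1 ≤ n₁ ∧ 1 ≤ n₂ ∧ Nonempty (G ≃g doubleStar n₁ n₂) := by
  have := h.nonempty_leavesAt_left.to_subtype
  have := h.nonempty_leavesAt_right.to_subtype
  have f₁ := (Finite.equivFin (leavesAt G u)).symm
  have f₂ := (Finite.equivFin (leavesAt G v)).symm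
  exact ⟨_, _, Nat.card_pos, Nat.card_pos,
    ⟨RelIso.symm ⟨Equiv.ofBijective _ (h.bijective_labelling f₁ f₂),
      h.adj_labelling_iff f₁ f₂ _ _⟩⟩⟩

end Iso

theorem isAcyclic (h : IsDoubleStar G u v) : G.IsAcyclic := by
  classical
  intro w p hp
  have hsupp : p.support.tail ⊆ [u, v] := by
    intro x hx
    have hx := List.mem_of_mem_tail hx
    have hq := hp.rotate hx
    have hleaf (y : V) : x ∉ leavesAt G y :=
      notMem_leavesAt_of_adj (Walk.adj_snd hq.not_nil) (Walk.adj_penultimate hq.not_nil).symm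
        hq.snd_ne_penultimate
    by_contra hxuv
    simp only [List.mem_cons, List.not_mem_nil, or_false, not_or] at hxuv
    exact (h.mem_leavesAt x hxuv.1 hxuv.2).elim (hleaf u) (hleaf v)
  have hle := (hp.support_nodup.subperm hsupp).length_le
  have hlen := hp.three_le_length
  simp only [List.length_tail, Walk.length_support, List.length_cons, List.length_nil] at hle
  omega

theorem pathLengthLE_three (h : IsDoubleStar G u v) : PathLengthLE G 3 := by
  intro a b p hp
  by_contra! hlen
  have inj {i j : ℕ} (hi : i ≤ p.length) (hj : j ≤ p.length) (hij : i ≠ j) :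
      p.getVert i ≠ p.getVert j := fun h => hij (hp.getVert_injOn hi hj h)
  have center (i : ℕ) (hi : i + 1 < p.length) : p.getVert (i + 1) = u ∨ p.getVert (i + 1) = v := by
    have hleaf (y : V) : p.getVert (i + 1) ∉ leavesAt G y :=
      notMem_leavesAt_of_adj (p.adj_getVert_succ (by omega : i < p.length)).symm
        (p.adj_getVert_succ hi) (inj (by omega) (by omega) (by omega))
    by_contra! hne
    exact (h.mem_leavesAt _ hne.1 hne.2).elim (hleaf u) (hleaf v)
  have h₁₂ := inj (i := 1) (j := 2) (by omega) (by omega) (by omega)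
  have h₁₃ := inj (i := 1) (j := 3) (by omega) (by omega) (by omega)
  have h₂₃ := inj (i := 2) (j := 3) (by omega) (by omega) (by omega)
  rcases center 0 (by omega) with h₁ | h₁ <;> rcases center 1 (by omega) with h₂ | h₂ <;>
    rcases center 2 (by omega) with h₃ | h₃ <;> simp_all

theorem three_le_dist_compl (h : IsDoubleStar G u v) (hGc : Gᶜ.Connected) : 3 ≤ Gᶜ.dist u v := by
  obtain ⟨p, hp⟩ := hGc.exists_walk_length_eq_dist u v
  rw [← hp]
  rcases p with _ | ⟨hux, _ | ⟨hxv, _ | _⟩⟩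
  · exact absurd rfl h.adj.ne
  · exact absurd h.adj hux.2
  · rcases h.mem_leavesAt _ hux.ne' hxv.ne with hx | hx
    · exact absurd ((hx u).2 rfl).symm hux.2
    · exact absurd ((hx v).2 rfl) hxv.2
  · simp

theorem pathDominates_four [Finite V] (h : IsDoubleStar G u v) : PathDominates G 4 := by
  obtain ⟨a, ha⟩ := h.nonempty_leavesAt_left
  obtain ⟨b, hb⟩ := h.nonempty_leavesAt_right
  have hau := (ha u).2 rfl
  have hbv := (hb v).2 rfl
  have hab : a ≠ b := h.disjoint_leavesAt.ne_of_mem ha hb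
  have hav := ne_of_mem_of_not_mem ha h.right_notMem
  have hbu := ne_of_mem_of_not_mem hb h.left_notMem
  refine .of_isPath (p := .cons hau (.cons h.adj (.cons hbv.symm .nil))) ?_
  simp [hau.ne, hbv.ne', hab, hav, hbu.symm, h.adj.ne]

theorem pathDominates_compl_card [Finite V] (h : IsDoubleStar G u v) :
    PathDominates Gᶜ (Nat.card V) := by
  obtain ⟨a, ha⟩ := h.nonempty_leavesAt_left
  obtain ⟨b, hb⟩ := h.nonempty_leavesAt_right
  have hab : a ≠ b := h.disjoint_leavesAt.ne_of_mem ha hb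
  have hav := ne_of_mem_of_not_mem ha h.right_notMem
  have hau := ne_of_mem_of_not_mem ha h.left_notMem_left
  have hbu := ne_of_mem_of_not_mem hb h.left_notMem
  have hbv := ne_of_mem_of_not_mem hb h.symm.left_notMem_left
  have hub : ¬G.Adj u b := fun hadj => h.adj.ne ((hb u).1 hadj.symm)
  rw [← Set.ncard_univ]
  refine .of_isChain (l := [u, b, a, v]) (by simp) ?_ ?_ fun x _ => ?_
  · simp [compl_adj, ha v, hb a, hub, hab.symm, hbu.symm, hav, h.adj.ne']
  · simp [h.adj.ne, hbu.symm, hau.symm, hab.symm, hbv, hav]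
  · by_contra! hx
    obtain ⟨hxl, hx⟩ := hx
    simp only [List.mem_cons, List.not_mem_nil, or_false, not_or] at hxl
    obtain ⟨hxu, hxb, hxa, hxv⟩ := hxl
    refine hx a (by simp) b (by simp) hab ?_ ?_
    · exact ⟨hxa, fun hadj => hxu ((ha x).1 hadj.symm)⟩
    · exact ⟨hxb, fun hadj => hxv ((hb x).1 hadj.symm)⟩

theorem pc_add_pc_compl [Fintype V] (h : IsDoubleStar G u v) (hG : G.Connected)
    (hGc : Gᶜ.Connected) : G.pc 2 + Gᶜ.pc 2 = Fintype.card V + 2 := by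
  have hlower := card_le_pc_add_one_of_isTree ⟨hG, h.isAcyclic⟩ h.pathLengthLE_three
  have hupper := h.pathDominates_four.pc_add_le hG 2
  have hlower_compl := (le_min (le_refl 3) (h.three_le_dist_compl hGc)).trans
    (min_dist_le_pc hGc u v 2)
  have hupper_compl := h.pathDominates_compl_card.pc_add_le hGc 2
  rw [Nat.card_eq_fintype_card] at hupper_compl
  omega

end IsDoubleStar

/-! ### Graphs without paths of length four -/

theorem exists_adj_adj_not_adj_ne {V : Type*} [Nontrivial V] {G : SimpleGraph V}
    (hG : G.Preconnected) (hGc : Gᶜ.Preconnected) (u : V) :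
    ∃ v w, G.Adj u v ∧ G.Adj v w ∧ ¬G.Adj u w ∧ u ≠ w := by
  obtain ⟨z, huz⟩ := hGc.exists_adj_of_nontrivial u
  obtain ⟨p⟩ := hG u z
  obtain ⟨d, -, hfst, hsnd⟩ := p.exists_boundary_dart {x | x = u ∨ G.Adj u x} (Or.inl rfl)
    fun h => h.elim huz.ne' huz.2
  have hsnd : ¬(d.snd = u ∨ G.Adj u d.snd) := hsnd
  rw [not_or] at hsnd
  rcases hfst with hfst | hfst
  · exact absurd (hfst ▸ d.adj) hsnd.2
  · exact ⟨d.fst, d.snd, hfst, d.adj, hsnd.2, Ne.symm hsnd.1⟩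

/-- `a, u, v, b` are the consecutive vertices of a path of `G`. -/
structure IsFourPath {V : Type*} (G : SimpleGraph V) (a u v b : V) : Prop where
  adj_left : G.Adj a u
  adj_mid : G.Adj u v
  adj_right : G.Adj v b
  ne_left : a ≠ v
  ne_right : u ≠ b
  ne_ends : a ≠ b

theorem exists_isFourPath {V : Type*} [Nontrivial V] {G : SimpleGraph V} (hG : G.Preconnected)
    (hGc : Gᶜ.Preconnected) : ∃ a u v b, IsFourPath G a u v b := by
  obtain ⟨u⟩ : Nonempty V := inferInstance
  obtain ⟨v, b, huv, hvb, hub, hne⟩ := exists_adj_adj_not_adj_ne hG hGc u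
  obtain ⟨x, y, hvx, hxy, hvy, hne'⟩ := exists_adj_adj_not_adj_ne hG hGc v
  rcases eq_or_ne x u with rfl | hxu
  · exact ⟨y, x, v, b, hxy.symm, hvx.symm, hvb, hne'.symm, hne, by rintro rfl; exact hvy hvb⟩
  · exact ⟨u, v, x, y, huv, hvx, hxy, hxu.symm, hne', by rintro rfl; exact hvy huv.symm⟩

namespace IsFourPath

variable {V : Type*} {G : SimpleGraph V} {a u v b x : V}

theorem symm (h : IsFourPath G a u v b) : IsFourPath G b v u a :=
  ⟨h.adj_right.symm, h.adj_mid.symm, h.adj_left.symm, h.ne_right.symm, h.ne_left.symm,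
    h.ne_ends.symm⟩

theorem eq_of_adj_left (h : IsFourPath G a u v b) (hmax : PathLengthLE G 3) (hx : G.Adj x a) :
    x = u ∨ x = v ∨ x = b := by
  by_contra! hne
  have := hmax (.cons hx (.cons h.adj_left (.cons h.adj_mid (.cons h.adj_right .nil))))
    (by simp [hx.ne, hne, h.adj_left.ne, h.adj_mid.ne, h.adj_right.ne, h.ne_left, h.ne_right,
      h.ne_ends])
  simp at this

theorem eq_of_adj_right (h : IsFourPath G a u v b) (hmax : PathLengthLE G 3) (hx : G.Adj x b) :
    x = v ∨ x = u ∨ x = a :=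
  h.symm.eq_of_adj_left hmax hx

theorem adj_center_of_adj_of_adj (h : IsFourPath G a u v b) (hmax : PathLengthLE G 3) {y : V}
    (hux : G.Adj u x) (hxy : G.Adj x y) : y = u ∨ y = v ∨ G.Adj u y ∨ G.Adj v y := by
  by_contra! hy
  obtain ⟨hyu, hyv, huy, hvy⟩ := hy
  have hyb : y ≠ b := by rintro rfl; exact hvy h.adj_right
  have hxv : x ≠ v := by rintro rfl; exact hvy hxy
  have hxb : x ≠ b := by
    rintro rfl
    rcases h.eq_of_adj_right hmax hxy.symm with rfl | rfl | rfl
    exacts [hyv rfl, hyu rfl, huy h.adj_left.symm]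
  have hpath : IsFourPath G x u v b := ⟨hux.symm, h.adj_mid, h.adj_right, hxv, h.ne_right, hxb⟩
  rcases hpath.eq_of_adj_left hmax hxy.symm with rfl | rfl | rfl <;> contradiction

theorem adj_or_adj (h : IsFourPath G a u v b) (hmax : PathLengthLE G 3) (hG : G.Preconnected)
    (x : V) : G.Adj u x ∨ G.Adj v x := by
  suffices hx : x = u ∨ x = v ∨ G.Adj u x ∨ G.Adj v x by
    rcases hx with rfl | rfl | hx
    exacts [Or.inr h.adj_mid.symm, Or.inl h.adj_mid, hx]
  by_contra hx
  obtain ⟨p⟩ := hG u x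
  obtain ⟨d, -, hfst, hsnd⟩ := p.exists_boundary_dart
    {x | x = u ∨ x = v ∨ G.Adj u x ∨ G.Adj v x} (Or.inl rfl) hx
  refine hsnd ?_
  rcases hfst with hfst | hfst | hfst | hfst
  · exact Or.inr (Or.inr (Or.inl (hfst ▸ d.adj)))
  · exact Or.inr (Or.inr (Or.inr (hfst ▸ d.adj)))
  · exact h.adj_center_of_adj_of_adj hmax hfst d.adj
  · have := h.symm.adj_center_of_adj_of_adj hmax hfst d.adj
    simp only [Set.mem_ofPred_eq]
    tauto

theorem not_adj_left (h : IsFourPath G a u v b) (hmax : PathLengthLE G 3) [Nontrivial V]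
    (hG : G.Preconnected) (hGc : Gᶜ.Preconnected) : ¬G.Adj a v := by
  intro hav
  obtain ⟨x, hvx⟩ := hGc.exists_adj_of_nontrivial v
  have hux := (h.adj_or_adj hmax hG x).resolve_right hvx.2
  have hpath : IsFourPath G u a v b :=
    ⟨h.adj_left.symm, hav, h.adj_right, h.adj_mid.ne, h.ne_ends, h.ne_right⟩
  rcases hpath.eq_of_adj_left hmax hux.symm with rfl | rfl | rfl
  exacts [hvx.2 hav.symm, hvx.ne rfl, hvx.2 h.adj_right]

theorem not_adj_of_adj (h : IsFourPath G a u v b) (hmax : PathLengthLE G 3) [Nontrivial V]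
    (hG : G.Preconnected) (hGc : Gᶜ.Preconnected) (hux : G.Adj u x) : ¬G.Adj v x := by
  intro hvx
  have hxb : x ≠ b := by
    rintro rfl
    exact h.symm.not_adj_left hmax hG hGc hux.symm
  have hpath : IsFourPath G x u v b :=
    ⟨hux.symm, h.adj_mid, h.adj_right, hvx.ne', h.ne_right, hxb⟩
  exact hpath.not_adj_left hmax hG hGc hvx.symm

theorem not_adj_ends (h : IsFourPath G a u v b) (hmax : PathLengthLE G 3)
    (hG : G.Preconnected) (hGc : Gᶜ.Preconnected) : ¬G.Adj a b := by
  intro hab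
  have eq_of_adj_left (x : V) (hx : G.Adj u x) : x = v ∨ x = b ∨ x = a :=
    (⟨h.adj_mid, h.adj_right, hab.symm, h.ne_right, h.ne_left.symm, h.adj_left.ne'⟩ :
      IsFourPath G u v b a).eq_of_adj_left hmax hx.symm
  have eq_of_adj_right (x : V) (hx : G.Adj v x) : x = u ∨ x = a ∨ x = b :=
    (⟨h.adj_mid.symm, h.adj_left.symm, hab, h.ne_left.symm, h.ne_right, h.adj_right.ne⟩ :
      IsFourPath G v u a b).eq_of_adj_left hmax hx.symm
  -- `G` is the 4-cycle `a, u, v, b`, so `{u, b}` is a component of its complement.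
  obtain ⟨p⟩ := hGc u a
  obtain ⟨d, -, hfst, hsnd⟩ := p.exists_boundary_dart {u, b} (by simp)
    (by simp [h.adj_left.ne, h.ne_ends])
  simp only [Set.mem_insert_iff, Set.mem_singleton_iff, not_or] at hfst hsnd
  have hsnd : d.snd = a ∨ d.snd = v := by
    rcases h.adj_or_adj hmax hG d.snd with hd | hd
    · have := eq_of_adj_left _ hd
      tauto
    · have := eq_of_adj_right _ hd
      tauto
  have hadj := d.adj.2
  rcases hfst with hfst | hfst <;> rcases hsnd with hsnd | hsnd <;> rw [hfst, hsnd] at hadj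
  exacts [hadj h.adj_left.symm, hadj h.adj_mid, hadj hab.symm, hadj h.adj_right.symm]

theorem mem_leavesAt_of_adj_left (h : IsFourPath G a u v b) (hmax : PathLengthLE G 3) [Nontrivial V]
    (hG : G.Preconnected) (hGc : Gᶜ.Preconnected) (hux : G.Adj u x) (hxv : x ≠ v) :
    x ∈ leavesAt G u := by
  refine fun y => ⟨fun hxy => by_contra fun hyu => ?_, fun hy => hy ▸ hux.symm⟩
  have hxb : x ≠ b := by
    rintro rfl
    exact h.not_adj_of_adj hmax hG hGc hux h.adj_right
  have hyv : y ≠ v := by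
    rintro rfl
    exact h.not_adj_of_adj hmax hG hGc hux hxy.symm
  rcases h.adj_or_adj hmax hG y with huy | hvy
  · have hpath : IsFourPath G x u v b :=
      ⟨hux.symm, h.adj_mid, h.adj_right, hxv, h.ne_right, hxb⟩
    rcases hpath.eq_of_adj_left hmax hxy.symm with rfl | rfl | rfl
    · exact hyu rfl
    · exact hyv rfl
    · exact h.not_adj_of_adj hmax hG hGc huy h.adj_right
  · have hpath : IsFourPath G x u v y :=
      ⟨hux.symm, h.adj_mid, hvy, hxv, Ne.symm hyu, hxy.ne⟩
    exact hpath.not_adj_ends hmax hG hGc hxy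

theorem isDoubleStar (h : IsFourPath G a u v b) (hmax : PathLengthLE G 3) [Nontrivial V]
    (hG : G.Preconnected) (hGc : Gᶜ.Preconnected) : IsDoubleStar G u v where
  adj := h.adj_mid
  left_notMem := notMem_leavesAt_of_adj h.adj_mid h.adj_left.symm h.ne_left.symm
  right_notMem := notMem_leavesAt_of_adj h.adj_mid.symm h.adj_right h.ne_right
  mem_leavesAt x hxu hxv := (h.adj_or_adj hmax hG x).imp
    (fun hux => h.mem_leavesAt_of_adj_left hmax hG hGc hux hxv)
    (fun hvx => h.symm.mem_leavesAt_of_adj_left hmax hG hGc hvx hxu)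

end IsFourPath

theorem exists_isDoubleStar_of_pathLengthLE_three {V : Type*} [Nontrivial V] {G : SimpleGraph V}
    (hG : G.Preconnected) (hGc : Gᶜ.Preconnected) (hmax : PathLengthLE G 3) :
    ∃ u v, IsDoubleStar G u v := by
  obtain ⟨a, u, v, b, h⟩ := exists_isFourPath hG hGc
  exact ⟨u, v, h.isDoubleStar hmax hG hGc⟩

/-! ### Longest paths -/

/-- `p` is a longest path of `G`. -/
structure IsLongestPath {V : Type*} {G : SimpleGraph V} {a b : V} (p : G.Walk a b) : Prop where
  isPath : p.IsPath
  pathLengthLE : PathLengthLE G p.length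

theorem exists_isLongestPath {V : Type*} [Finite V] [Nonempty V] (G : SimpleGraph V) :
    ∃ (a b : V) (p : G.Walk a b), IsLongestPath p :=
  let ⟨a, b, p, hp, hmax⟩ := Walk.exists_isPath_forall_isPath_length_le_length G
  ⟨a, b, p, hp, hmax⟩

theorem exists_isPath_length_eq_of_isCycle {V : Type*} {G : SimpleGraph V} (hG : G.Preconnected)
    {a w : V} {C : G.Walk a a} (hC : C.IsCycle) (hw : w ∉ C.support) :
    ∃ (u v : V) (p : G.Walk u v), p.IsPath ∧ p.length = C.length := by
  classical
  obtain ⟨r⟩ := hG a w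
  obtain ⟨d, -, hfst, hsnd⟩ := r.exists_boundary_dart {v | v ∈ C.support} C.start_mem_support hw
  have hrot : (C.rotate d.fst hfst).IsCycle := hC.rotate hfst
  refine ⟨_, _, (C.rotate d.fst hfst).tail.concat d.adj,
    hrot.isPath_tail.concat (fun h => ?_) _, ?_⟩
  · exact hsnd ((Walk.mem_support_rotate_iff C d.fst hfst).1
      (List.mem_of_mem_tail ((Walk.support_tail_of_not_nil _ hrot.not_nil) ▸ h)))
  · rw [Walk.length_concat, Walk.length_tail_add_one hrot.not_nil, Walk.length_rotate]

namespace IsLongestPath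

variable {V : Type*} {G : SimpleGraph V} {x z w : V} {p : G.Walk x z}

theorem reverse (hp : IsLongestPath p) : IsLongestPath p.reverse :=
  ⟨hp.isPath.reverse, by simpa using hp.pathLengthLE⟩

theorem not_adj_start (hp : IsLongestPath p) (hw : w ∉ p.support) : ¬G.Adj w x := by
  intro hwx
  have := hp.pathLengthLE (.cons hwx p) (hp.isPath.cons hw)
  simp at this

theorem not_adj_end (hp : IsLongestPath p) (hw : w ∉ p.support) : ¬G.Adj w z :=
  hp.reverse.not_adj_start (by simpa using hw)

theorem compl_adj_start (hp : IsLongestPath p) (hw : w ∉ p.support) : Gᶜ.Adj w x :=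
  ⟨fun h => hw (h ▸ p.start_mem_support), hp.not_adj_start hw⟩

theorem compl_adj_end (hp : IsLongestPath p) (hw : w ∉ p.support) : Gᶜ.Adj w z :=
  ⟨fun h => hw (h ▸ p.end_mem_support), hp.not_adj_end hw⟩

theorem not_adj_ends (hp : IsLongestPath p) (hG : G.Preconnected) (hlen : 2 ≤ p.length)
    (hw : w ∉ p.support) : ¬G.Adj z x := by
  intro hzx
  have hC : (Walk.cons hzx p).IsCycle := (Walk.cons_isCycle_iff p hzx).2 ⟨hp.isPath, fun h => by
    have := hp.isPath.length_eq_one_of_mem_edges (Sym2.eq_swap ▸ h)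
    omega⟩
  obtain ⟨u, v, q, hq, hlen'⟩ := exists_isPath_length_eq_of_isCycle hG hC (w := w) (by
    rw [Walk.support_cons, List.mem_cons, not_or]
    exact ⟨fun h => hw (h ▸ p.end_mem_support), hw⟩)
  have := hp.pathLengthLE q hq
  simp only [hlen', Walk.length_cons] at this
  omega

theorem not_adj_of_adj_of_adj {u v : V} {p₁ : G.Walk x u} {huv : G.Adj u v} {p₂ : G.Walk v z}
    (hp : IsLongestPath (p₁.append (.cons huv p₂))) (hw : w ∉ (p₁.append (.cons huv p₂)).support)
    (hwu : G.Adj w u) : ¬G.Adj w v := by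
  intro hwv
  have hpath : (p₁.append (.cons hwu.symm (.cons hwv p₂))).IsPath := by
    have := hp.isPath
    simp only [Walk.isPath_def, Walk.support_append, Walk.support_cons, List.tail_cons] at this hw ⊢
    grind
  have := hp.pathLengthLE _ hpath
  simp at this

section Inner

variable {u q v y : V} {p₁ : G.Walk x u} {huq : G.Adj u q} {hqv : G.Adj q v} {p₂ : G.Walk v z}

theorem not_adj_end_of_adj (hp : IsLongestPath (p₁.append (.cons huq (.cons hqv p₂))))
    (hy : y ∉ (p₁.append (.cons huq (.cons hqv p₂))).support) (hyq : G.Adj y q) : ¬G.Adj u z := by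
  intro huz
  have hpath : (Walk.cons hyq (.cons hqv (p₂.append (.cons huz.symm p₁.reverse)))).IsPath := by
    have := hp.isPath
    simp only [Walk.isPath_def, Walk.support_append, Walk.support_cons, List.tail_cons,
      Walk.support_reverse] at this hy ⊢
    grind
  have := hp.pathLengthLE _ hpath
  simp only [Walk.length_cons, Walk.length_append, Walk.length_reverse] at this
  omega

theorem not_adj_start_of_adj (hp : IsLongestPath (p₁.append (.cons huq (.cons hqv p₂))))
    (hy : y ∉ (p₁.append (.cons huq (.cons hqv p₂))).support) (hyq : G.Adj y q) : ¬G.Adj x v := by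
  have hrev : (p₁.append (.cons huq (.cons hqv p₂))).reverse =
      p₂.reverse.append (.cons hqv.symm (.cons huq.symm p₁.reverse)) := by
    simp [← Walk.append_assoc]
  exact fun hxv => (hrev ▸ hp.reverse).not_adj_end_of_adj
    (by rwa [← hrev, Walk.support_reverse, List.mem_reverse]) hyq hxv.symm

end Inner

end IsLongestPath

/-- `y` is adjacent to every vertex of `L` except possibly `m`. -/
def AdjAllBut {V : Type*} (H : SimpleGraph V) (y : V) (L : Set V) (m : V) : Prop :=
  ∀ a ∈ L, a ≠ m → H.Adj y a

section ComplementPaths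

variable {V : Type*} [Finite V] {H : SimpleGraph V} {D L : Set V} {m m' x z y y' w : V}

theorem pathDominates_union_of_ne (hD : ∀ d ∈ D, ∃ n ≠ x, AdjAllBut H d L n) (hyD : y ∈ D)
    (hyL : y ∉ L) (hy'L : y' ∉ L) (hyy' : y ≠ y') (hy : AdjAllBut H y L m)
    (hy' : AdjAllBut H y' L m') (hmm' : m ≠ m') (hm : m ∈ L) (hm' : m' ∈ L) (hx : x ∈ L)
    (hxm : x ≠ m) (hxm' : x ≠ m') : PathDominates H (D ∪ L).ncard := by
  refine .of_isChain (l := [m', y, x, y', m]) (by simp) ?_ ?_ ?_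
  · simp [(hy m' hm' hmm'.symm).symm, hy x hx hxm, (hy' x hx hxm').symm, hy' m hm hmm']
  · grind
  · rintro v (hv | hv)
    · obtain ⟨n, hn, hvn⟩ := hD v hv
      refine Or.inr ⟨x, by simp, ?_⟩
      rcases ne_or_eq m n with hmn | rfl
      · exact ⟨m, by simp, hxm, hvn x hx hn.symm, hvn m hm hmn⟩
      · exact ⟨m', by simp, hxm', hvn x hx hn.symm, hvn m' hm' hmm'.symm⟩
    · by_cases hvm : v = m
      · simp [hvm]
      by_cases hvm' : v = m'
      · simp [hvm']
      exact Or.inr ⟨y, by simp, y', by simp, hyy', (hy v hv hvm).symm, (hy' v hv hvm').symm⟩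

theorem pathDominates_union_of_isChain (hD : ∀ d ∈ D, AdjAllBut H d L m) (hm : m ∈ L)
    (hyD : y ∈ D) (hy'D : y' ∈ D) (hyy' : y ≠ y') {a b : V} (ha : a ∈ L) (hb : b ∈ L) (ham : a ≠ m)
    (hbm : b ≠ m) (hab : a ≠ b) {l : List V} (hl : l.IsChain H.Adj) (hnodup : l.Nodup)
    (hsub : [y, y', a, b, w] ⊆ l) (hw : w ∉ (D ∪ L) \ {m}) : PathDominates H (D ∪ L).ncard := by
  rw [← Set.ncard_sdiff_singleton_add_one (Set.mem_union_right D hm),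
    ← Set.ncard_insert_of_notMem hw]
  obtain ⟨hyl, hy'l, hal, hbl, hwl⟩ : y ∈ l ∧ y' ∈ l ∧ a ∈ l ∧ b ∈ l ∧ w ∈ l := by
    simpa using hsub
  refine .of_isChain (List.ne_nil_of_mem hyl) hl hnodup ?_
  rintro v (rfl | ⟨hv | hv, hvm⟩)
  · exact Or.inl hwl
  · exact Or.inr ⟨a, hal, b, hbl, hab, hD v hv a ha ham, hD v hv b hb hbm⟩
  · exact Or.inr ⟨y, hyl, y', hy'l, hyy', (hD y hyD v hv hvm).symm, (hD y' hy'D v hv hvm).symm⟩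

theorem pathDominates_union_of_forall (hH : H.Preconnected) (hDL : Disjoint D L) (hx : x ∈ L)
    (hz : z ∈ L) (hxz : x ≠ z) (hout : ∀ w ∉ L, H.Adj w x)
    (hD : ∀ d ∈ D, AdjAllBut H d L m) (hm : m ∈ L) (hmx : m ≠ x) (hmz : m ≠ z)
    (hcard : 2 ≤ D.ncard) : PathDominates H (D ∪ L).ncard := by
  have : Nontrivial V := ⟨x, z, hxz⟩
  obtain ⟨w, hmw⟩ := hH.exists_adj_of_nontrivial m
  have hwm : w ≠ m := hmw.ne'
  by_cases hwD : w ∈ D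
  · obtain ⟨y, hyD, hyw⟩ := Set.exists_ne_of_one_lt_ncard hcard w
    refine pathDominates_union_of_isChain hD hm hwD hyD hyw.symm hx hz hmx.symm hmz.symm hxz
      (l := [m, w, x, y, z]) (w := m) ?_ ?_ (by simp) (by simp)
    · simp [hmw, hD w hwD x hx hmx.symm, (hD y hyD x hx hmx.symm).symm, hD y hyD z hz hmz.symm]
    · have := hDL.notMem_of_mem_left hwD
      have := hDL.notMem_of_mem_left hyD
      grind
  obtain ⟨y, y', hyD, hy'D, hyy'⟩ := (Set.one_lt_ncard_iff).1 hcard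
  have := hDL.notMem_of_mem_left hyD
  have := hDL.notMem_of_mem_left hy'D
  by_cases hwL : w ∈ L
  · obtain ⟨a, haL, ham, haw⟩ : ∃ a ∈ L, a ≠ m ∧ a ≠ w := by
      rcases ne_or_eq x w with hxw | rfl
      exacts [⟨x, hx, hmx.symm, hxw⟩, ⟨z, hz, hmz.symm, hxz.symm⟩]
    refine pathDominates_union_of_isChain hD hm hyD hy'D hyy' haL hwL ham hwm haw
      (l := [m, w, y, a, y']) (w := m) ?_ ?_ (by simp) (by simp)
    · simp [hmw, (hD y hyD w hwL hwm).symm, hD y hyD a haL ham, (hD y' hy'D a haL ham).symm]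
    · grind
  · have hwx := hout w hwL
    refine pathDominates_union_of_isChain hD hm hyD hy'D hyy' hx hz hmx.symm hmz.symm hxz
      (l := [w, x, y, z, y']) (w := w) ?_ ?_ (by simp) (by simp [hwD, hwL])
    · simp [hwx, (hD y hyD x hx hmx.symm).symm, hD y hyD z hz hmz.symm,
        (hD y' hy'D z hz hmz.symm).symm]
    · grind

theorem pathDominates_union_of_two_le (hH : H.Preconnected) (hDL : Disjoint D L) (hx : x ∈ L)
    (hz : z ∈ L) (hxz : x ≠ z) (hout : ∀ w ∉ L, H.Adj w x)
    (hD : ∀ d ∈ D, ∃ n ∈ L, n ≠ x ∧ n ≠ z ∧ AdjAllBut H d L n) (hcard : 2 ≤ D.ncard) :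
    PathDominates H (D ∪ L).ncard := by
  obtain ⟨y, hyD⟩ : D.Nonempty := Set.nonempty_of_ncard_ne_zero (by omega)
  obtain ⟨m, hm, hmx, hmz, hy⟩ := hD y hyD
  by_cases hall : ∀ d ∈ D, AdjAllBut H d L m
  · exact pathDominates_union_of_forall hH hDL hx hz hxz hout hall hm hmx hmz hcard
  push Not at hall
  obtain ⟨y', hy'D, hy'm⟩ := hall
  obtain ⟨m', hm', hm'x, -, hy'⟩ := hD y' hy'D
  refine pathDominates_union_of_ne (fun d hd => ?_) hyD (hDL.notMem_of_mem_left hyD)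
    (hDL.notMem_of_mem_left hy'D) ?_ hy hy' ?_ hm hm' hx hmx.symm hm'x.symm
  · obtain ⟨n, -, hnx, -, hn⟩ := hD d hd
    exact ⟨n, hnx, hn⟩
  · rintro rfl
    exact hy'm hy
  · rintro rfl
    exact hy'm hy'

end ComplementPaths

theorem ne_of_isPath_of_length_pos {V : Type*} {G : SimpleGraph V} {a b : V} {p : G.Walk a b}
    (hp : p.IsPath) (hlen : 0 < p.length) : a ≠ b := by
  rintro rfl
  exact hlen.ne' (Walk.length_eq_zero_iff.2 (Walk.isPath_iff_nil.1 hp))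

theorem ncard_setOf_mem_support {V : Type*} {G : SimpleGraph V} {a b : V} {p : G.Walk a b}
    (hp : p.IsPath) : {v | v ∈ p.support}.ncard = p.length + 1 := by
  classical
  rw [← Walk.length_support, ← List.toFinset_card_of_nodup hp.support_nodup,
    ← Set.ncard_coe_finset, List.coe_toFinset]

theorem exists_mem_support_notMem {V : Type*} {G : SimpleGraph V} {a b : V} {p : G.Walk a b}
    (hp : p.IsPath) {s : Finset V} (hs : s.card ≤ p.length) : ∃ v ∈ p.support, v ∉ s := by
  classical
  have hcard : s.card < p.support.toFinset.card := by
    rw [List.toFinset_card_of_nodup hp.support_nodup, Walk.length_support]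
    exact Nat.lt_succ_of_le hs
  obtain ⟨v, hvp, hvs⟩ := Finset.exists_mem_notMem_of_card_lt_card hcard
  exact ⟨v, List.mem_toFinset.1 hvp, hvs⟩

theorem pathDominates_six_of_adjAllBut {V : Type*} [Finite V] {H : SimpleGraph V} {L : Set V}
    {x y q w : V} (hx : AdjAllBut H x L q) (hy : AdjAllBut H y L q) (hxy : x ≠ y) (hxL : x ∉ L)
    (hyL : y ∉ L) (hqw : H.Adj q w) (hq : q ∈ L) (hw : w ∈ L) (hcard : 4 ≤ L.ncard) :
    PathDominates H 6 := by
  obtain ⟨a, ha, has⟩ := Set.exists_mem_notMem_of_ncard_lt_ncard (s := {q, w}) (t := L)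
    ((Set.ncard_insert_le q {w}).trans_lt (by rw [Set.ncard_singleton]; omega))
  obtain ⟨b, hb, hbs⟩ := Set.exists_mem_notMem_of_ncard_lt_ncard (s := {a, q, w}) (t := L)
    ((Set.ncard_insert_le a {q, w}).trans_lt (by
      have := Set.ncard_insert_le q {w}
      rw [Set.ncard_singleton] at this
      omega))
  simp only [Set.mem_insert_iff, Set.mem_singleton_iff, not_or] at has hbs
  refine .of_isChain_append (l := [q, w, y, a, x, b]) (l' := []) (by simp) ?_ ?_ (by simp)
  · simp [hqw, (hy w hw hqw.ne').symm, hy a ha has.1, (hx a ha has.1).symm, hx b hb hbs.2.1]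
  · have := hqw.ne
    grind

theorem pathDominates_card_of_cons {V : Type*} [Finite V] {G : SimpleGraph V} {x q y z a : V}
    {hxq : G.Adj x q} {p : G.Walk q z} (hp : p.IsPath) (hyp : y ∉ p.support)
    (hall : ∀ v, v ∈ (Walk.cons hxq p).support ∨ v = y) (hyq : G.Adj y q) (ha : a ∈ p.support)
    (haq : a ≠ q) (hxa : G.Adj x a) : PathDominates G (Nat.card V) := by
  rw [← Set.ncard_univ]
  refine .of_subset (hp.cons (h := hyq) hyp) fun v _ => ?_
  rcases hall v with hv | rfl
  · rcases List.mem_cons.1 hv with rfl | hv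
    · exact Or.inr ⟨q, by simp, a, by simp [ha], haq.symm, hxq, hxa⟩
    · exact Or.inl (by simp [hv])
  · exact Or.inl (by simp)

theorem pathDominates_card_or_compl_of_cons {V : Type*} [Finite V] {G : SimpleGraph V}
    {x q y z : V} {hxq : G.Adj x q} {p : G.Walk q z} (hp : (Walk.cons hxq p).IsPath)
    (hGc : Gᶜ.Preconnected) (hlen : 3 ≤ p.length) (hy : y ∉ (Walk.cons hxq p).support)
    (hall : ∀ v, v ∈ (Walk.cons hxq p).support ∨ v = y) (hyq : G.Adj y q)
    (hym : AdjAllBut Gᶜ y {v | v ∈ (Walk.cons hxq p).support} q) :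
    PathDominates G (Nat.card V) ∨ PathDominates Gᶜ 6 := by
  obtain ⟨hpath, hxp⟩ := (Walk.cons_isPath_iff hxq p).1 hp
  obtain ⟨hyx, hyp⟩ : y ≠ x ∧ y ∉ p.support := by
    simpa only [Walk.support_cons, List.mem_cons, not_or] using hy
  by_cases hx : ∃ a ∈ p.support, a ≠ q ∧ G.Adj x a
  · obtain ⟨a, ha, haq, hxa⟩ := hx
    exact Or.inl (pathDominates_card_of_cons hpath hyp hall hyq ha haq hxa)
  push Not at hx
  have : Nontrivial V := ⟨x, q, hxq.ne⟩
  obtain ⟨w, hqw⟩ := hGc.exists_adj_of_nontrivial q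
  have hw : w ∈ p.support := by
    rcases hall w with hw | rfl
    · exact (List.mem_cons.1 hw).resolve_left fun h => hqw.2 (h ▸ hxq.symm)
    · exact absurd hyq.symm hqw.2
  right
  refine pathDominates_six_of_adjAllBut (L := {v | v ∈ p.support})
    (fun v hv hvq => ⟨fun h => hxp (by rwa [h]), hx v hv hvq⟩)
    (fun v hv hvq => hym v (List.mem_cons_of_mem x hv) hvq) hyx.symm hxp hyp hqw
    p.start_mem_support hw ?_
  rw [ncard_setOf_mem_support hpath]
  omega

theorem exists_eq_append_cons_cons {V : Type*} {G : SimpleGraph V} {x z q : V} {p : G.Walk x z}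
    (hq : q ∈ p.support) (hqx : q ≠ x) (hqz : q ≠ z) :
    ∃ (u v : V) (p₁ : G.Walk x u) (huq : G.Adj u q) (hqv : G.Adj q v) (p₂ : G.Walk v z),
      p = p₁.append (.cons huq (.cons hqv p₂)) := by
  induction p with
  | nil => exact absurd (by simpa using hq) hqx
  | @cons x b z hxb p ih =>
    rcases eq_or_ne q b with rfl | hqb
    · cases p with
      | nil => exact absurd rfl hqz
      | cons hqv p₂ => exact ⟨x, _, .nil, hxb, hqv, p₂, rfl⟩
    · obtain ⟨u, v, p₁, huq, hqv, p₂, rfl⟩ := ih (by simpa [hqx] using hq) hqb hqz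
      exact ⟨u, v, .cons hxb p₁, huq, hqv, p₂, rfl⟩

namespace IsLongestPath

variable {V : Type*} {G : SimpleGraph V} {x z y : V}

theorem exists_adjAllBut {p : G.Walk x z} (hp : IsLongestPath p) (hlen : 2 ≤ p.length)
    (hy : y ∉ twoDominated p) :
    ∃ m ∈ p.support, m ≠ x ∧ m ≠ z ∧ AdjAllBut Gᶜ y {v | v ∈ p.support} m := by
  classical
  have hyp : y ∉ p.support := fun h => hy (Or.inl h)
  by_cases hadj : ∃ m ∈ p.support, G.Adj y m
  · obtain ⟨m, hm, hym⟩ := hadj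
    refine ⟨m, hm, ?_, ?_, fun a ha ham =>
      ⟨?_, fun hya => hy (Or.inr ⟨a, ha, m, hm, ham, hya, hym⟩)⟩⟩
    · rintro rfl
      exact hp.not_adj_start hyp hym
    · rintro rfl
      exact hp.not_adj_end hyp hym
    · rintro rfl
      exact hyp ha
  · obtain ⟨m, hm, hmxz⟩ := exists_mem_support_notMem hp.isPath (s := {x, z})
      (Finset.card_le_two.trans hlen)
    simp only [Finset.mem_insert, Finset.mem_singleton, not_or] at hmxz
    exact ⟨m, hm, hmxz.1, hmxz.2,
      fun a ha _ => ⟨fun h => hyp (h ▸ ha), fun hya => hadj ⟨a, ha, hya⟩⟩⟩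

theorem exists_compl_adj_inner {w : V} {p : G.Walk x z} (hp : IsLongestPath p)
    (hlen : 3 ≤ p.length) (hw : w ∉ p.support) :
    ∃ b ∈ p.support, b ≠ x ∧ b ≠ z ∧ Gᶜ.Adj w b := by
  match p, hp, hlen, hw with
  | .cons (v := b) hxb (.cons (v := c) hbc r), hp, hlen, hw =>
    have hpath := hp.isPath
    simp only [Walk.cons_isPath_iff, Walk.support_cons, List.mem_cons, not_or] at hpath hw
    obtain ⟨⟨hr, hbr⟩, hxb', hxr⟩ := hpath
    obtain ⟨hwx, hwb, hwr⟩ := hw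
    by_cases hadj : G.Adj w b
    · have hcz : c ≠ z := by
        rintro rfl
        have := Walk.length_eq_zero_iff.2 (Walk.isPath_iff_nil.1 hr)
        simp only [Walk.length_cons] at hlen
        omega
      refine ⟨c, by simp, ?_, hcz, ?_⟩
      · rintro rfl
        exact hxr r.start_mem_support
      · refine ⟨fun h => hwr (h ▸ r.start_mem_support), ?_⟩
        exact hp.not_adj_of_adj_of_adj (p₁ := .cons hxb .nil) (by simp [hwx, hwb, hwr]) hadj
    · refine ⟨b, by simp, Ne.symm hxb', ?_, hwb, hadj⟩
      rintro rfl
      exact hbr r.end_mem_support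

variable [Finite V]

theorem pathDominates_compl_of_adjAllBut {w m : V} {p : G.Walk x z} (hp : IsLongestPath p)
    (hlen : 4 ≤ p.length) (hy : y ∉ p.support) (hw : w ∉ p.support) (hwy : w ≠ y)
    (hym : AdjAllBut Gᶜ y {v | v ∈ p.support} m) : PathDominates Gᶜ 6 := by
  classical
  obtain ⟨b, hb, hbx, hbz, hwb⟩ := hp.exists_compl_adj_inner (by omega) hw
  obtain ⟨a, ha, has⟩ := exists_mem_support_notMem hp.isPath (s := {m, b, x, z})
    (Finset.card_le_four.trans hlen)
  simp only [Finset.mem_insert, Finset.mem_singleton, not_or] at has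
  obtain ⟨ham, hab, hax, haz⟩ := has
  have hxz : x ≠ z := ne_of_isPath_of_length_pos hp.isPath (by omega)
  have hx := p.start_mem_support
  have hz := p.end_mem_support
  refine .of_isChain_append (l := [a, y, x, w, b]) (l' := [z]) (by simp) ?_ ?_ ?_
  · simp [(hym a ha ham).symm, (hp.compl_adj_start hy), (hp.compl_adj_start hw).symm, hwb]
  · have hne (v : V) (hv : v ∈ p.support) : v ≠ y ∧ v ≠ w :=
      ⟨fun h => hy (h ▸ hv), fun h => hw (h ▸ hv)⟩
    simp [hab, hax, haz, hne a ha, (hne x hx).1.symm, (hne b hb).1.symm,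
      (hne b hb).2.symm, (hne z hz).1.symm, (hne z hz).2.symm, hne x hx, hwy.symm, hbx.symm, hbz,
      hxz]
  · simp only [List.mem_singleton, forall_eq]
    exact ⟨y, by simp, w, by simp, hwy.symm, (hp.compl_adj_end hy).symm, (hp.compl_adj_end hw).symm⟩

theorem pathDominates_compl_of_append {u q v : V} {p₁ : G.Walk x u} {huq : G.Adj u q}
    {hqv : G.Adj q v} {p₂ : G.Walk v z}
    (hp : IsLongestPath (p₁.append (.cons huq (.cons hqv p₂)))) (hG : G.Preconnected)
    (hGc : Gᶜ.Preconnected) (hux : u ≠ x) (hvz : v ≠ z)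
    (hy : y ∉ (p₁.append (.cons huq (.cons hqv p₂))).support) (hyq : G.Adj y q)
    (hym : AdjAllBut Gᶜ y {v | v ∈ (p₁.append (.cons huq (.cons hqv p₂))).support} q) :
    PathDominates Gᶜ 6 := by
  have hzx := hp.not_adj_ends hG (by simp only [Walk.length_append, Walk.length_cons]; omega) hy
  have huz := hp.not_adj_end_of_adj hy hyq
  have hxv := hp.not_adj_start_of_adj hy hyq
  have hpath := hp.isPath
  have hx := p₁.start_mem_support
  have hu := p₁.end_mem_support
  have hv := p₂.start_mem_support
  have hz := p₂.end_mem_support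
  simp only [AdjAllBut, Walk.isPath_def, Walk.support_append, Walk.support_cons, List.tail_cons,
    Set.mem_ofPred_eq] at hpath hy hym
  -- `y, u, z, x, v` is a 5-cycle of the complement avoiding `q`.
  let C : Gᶜ.Walk y y := .cons (hym u (by grind) (by grind)) <| .cons (v := z) ⟨by grind, huz⟩ <|
    .cons (v := x) ⟨by grind, hzx⟩ <| .cons (v := v) ⟨by grind, hxv⟩ <|
    .cons (hym v (by grind) (by grind)).symm .nil
  have hnodup : [u, z, x, v, y].Nodup := by grind
  have hC : C.IsCycle := by
    refine (Walk.cons_isCycle_iff _ _).2 ⟨(Walk.isPath_def _).2 hnodup, ?_⟩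
    simp only [Walk.edges_cons, Walk.edges_nil, List.mem_cons, Sym2.eq_iff]
    grind
  have hqC : q ∉ C.support := by
    change q ∉ [y, u, z, x, v, y]
    grind
  obtain ⟨_, _, r, hr, hlen⟩ := exists_isPath_length_eq_of_isCycle hGc hC hqC
  have hdom := PathDominates.of_isPath hr
  rw [hlen] at hdom
  exact hdom

theorem pathDominates_card_or_compl_of_forall {p : G.Walk x z} (hp : IsLongestPath p)
    (hG : G.Preconnected) (hGc : Gᶜ.Preconnected) (hlen : 4 ≤ p.length) (hy : y ∉ twoDominated p)
    (hall : ∀ v, v ∈ p.support ∨ v = y) :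
    PathDominates G (Nat.card V) ∨ PathDominates Gᶜ 6 := by
  have hyp : y ∉ p.support := fun h => hy (Or.inl h)
  have : Nontrivial V := ⟨y, x, fun h => hyp (h ▸ p.start_mem_support)⟩
  obtain ⟨q, hyq⟩ := hG.exists_adj_of_nontrivial y
  have hq : q ∈ p.support := (hall q).resolve_right hyq.ne'
  have hym : AdjAllBut Gᶜ y {v | v ∈ p.support} q := fun a ha haq =>
    ⟨fun h => hyp (h ▸ ha), fun hya => hy (Or.inr ⟨a, ha, q, hq, haq, hya, hyq⟩)⟩
  obtain ⟨u, v, p₁, huq, hqv, p₂, rfl⟩ := exists_eq_append_cons_cons hq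
    (fun h => hp.not_adj_start hyp (h ▸ hyq)) (fun h => hp.not_adj_end hyp (h ▸ hyq))
  rcases eq_or_ne u x with rfl | hux
  · obtain rfl : p₁ = .nil := (Walk.isPath_iff_nil.1 hp.isPath.of_append_left).eq_nil
    exact pathDominates_card_or_compl_of_cons hp.isPath hGc
      (by simpa using hlen) hyp hall hyq hym
  rcases eq_or_ne v z with rfl | hvz
  · obtain rfl : p₂ = .nil := (Walk.isPath_iff_nil.1
      hp.isPath.of_append_right.of_cons.of_cons).eq_nil
    have hrev : (p₁.append (.cons huq (.cons hqv .nil))).reverse =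
      .cons hqv.symm (.cons huq.symm p₁.reverse) := by simp
    have hmem (a : V) : a ∈ (Walk.cons hqv.symm (.cons huq.symm p₁.reverse)).support ↔
        a ∈ (p₁.append (.cons huq (.cons hqv .nil))).support := by
      rw [← hrev, Walk.support_reverse, List.mem_reverse]
    exact pathDominates_card_or_compl_of_cons (hrev ▸ hp.isPath.reverse) hGc
      (by simpa using hlen) (by rwa [hmem]) (by simpa only [hmem] using hall) hyq
      (by simpa only [hmem] using hym)
  · exact Or.inr (hp.pathDominates_compl_of_append hG hGc hux hvz hyp hyq hym)

end IsLongestPath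

theorem pathDominates_of_not_pathLengthLE {V : Type*} [Finite V] {G : SimpleGraph V} {k : ℕ}
    (h : ¬PathLengthLE G k) : PathDominates G (k + 2) := by
  simp only [PathLengthLE, not_forall, not_le] at h
  obtain ⟨a, b, p, hp, hlen⟩ := h
  exact (PathDominates.of_isPath hp).mono (by omega)

theorem exists_pathDominates_of_not_pathLengthLE {V : Type*} [Finite V] {G : SimpleGraph V}
    (hG : G.Connected) (hGc : Gᶜ.Preconnected) (hlong : ¬PathLengthLE G 3)
    (hlongc : ¬PathLengthLE Gᶜ 3) :
    ∃ i j, PathDominates G i ∧ PathDominates Gᶜ j ∧ Nat.card V + 5 ≤ i + j := by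
  have := hG.nonempty
  obtain ⟨x, z, p, hp⟩ := exists_isLongestPath G
  have hlen : 4 ≤ p.length := by
    by_contra! hlen
    exact hlong fun a b q hq => (hp.pathLengthLE q hq).trans (by omega)
  set D := (twoDominated p)ᶜ
  set L := {v | v ∈ p.support}
  have hcard : (twoDominated p).ncard + D.ncard = Nat.card V := Set.ncard_add_ncard_compl _
  have hdom : PathDominates G (twoDominated p).ncard := .of_subset hp.isPath subset_rfl
  have hdomc : PathDominates Gᶜ 5 := pathDominates_of_not_pathLengthLE hlongc
  have hDL : Disjoint D L := Set.disjoint_left.2 fun v hvD hvL => hvD (Or.inl hvL)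
  rcases Nat.lt_or_ge D.ncard 2 with hD | hD
  · obtain hD | hD : D.ncard = 0 ∨ D.ncard = 1 := by omega
    · exact ⟨_, _, hdom, hdomc, by omega⟩
    obtain ⟨y, hDy⟩ := Set.ncard_eq_one.1 hD
    have hy : y ∈ D := hDy ▸ rfl
    by_cases hall : ∀ v, v ∈ p.support ∨ v = y
    · rcases hp.pathDominates_card_or_compl_of_forall hG.preconnected hGc hlen hy hall with h | h
      exacts [⟨_, _, h, hdomc, le_rfl⟩, ⟨_, _, hdom, h, by omega⟩]
    · push Not at hall
      obtain ⟨w, hw, hwy⟩ := hall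
      obtain ⟨m, -, -, -, hym⟩ := hp.exists_adjAllBut (by omega) hy
      exact ⟨_, _, hdom, hp.pathDominates_compl_of_adjAllBut hlen (hDL.notMem_of_mem_left hy)
        hw hwy hym, by omega⟩
  · refine ⟨_, _, hdom, pathDominates_union_of_two_le hGc hDL p.start_mem_support
      p.end_mem_support (ne_of_isPath_of_length_pos hp.isPath (by omega))
      (fun w hw => hp.compl_adj_start hw) (fun d hd => hp.exists_adjAllBut (by omega) hd) hD, ?_⟩
    rw [Set.ncard_union_eq hDL, ncard_setOf_mem_support hp.isPath]
    omega

theorem pc_add_pc_compl_le {V : Type*} [Fintype V] {G : SimpleGraph V} (hG : G.Connected)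
    (hGc : Gᶜ.Connected) (hlong : ¬PathLengthLE G 3) (hlongc : ¬PathLengthLE Gᶜ 3) :
    G.pc 2 + Gᶜ.pc 2 ≤ Fintype.card V + 1 := by
  obtain ⟨i, j, hi, hj, hij⟩ :=
    exists_pathDominates_of_not_pathLengthLE hG hGc.preconnected hlong hlongc
  have := hi.pc_add_le hG 2
  have := hj.pc_add_le hGc 2
  rw [Nat.card_eq_fintype_card] at hij
  omega

theorem exists_isDoubleStar_of_pc_add_pc_compl_eq {V : Type*} [Fintype V] {G : SimpleGraph V}
    (hG : G.Connected) (hGc : Gᶜ.Connected) (hsum : G.pc 2 + Gᶜ.pc 2 = Fintype.card V + 2) :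
    ∃ u v, IsDoubleStar G u v ∨ IsDoubleStar Gᶜ u v := by
  rcases subsingleton_or_nontrivial V with _ | _
  · simp only [pc_eq_zero_of_subsingleton] at hsum
    omega
  by_cases hshort : PathLengthLE G 3
  · obtain ⟨u, v, h⟩ :=
      exists_isDoubleStar_of_pathLengthLE_three hG.preconnected hGc.preconnected hshort
    exact ⟨u, v, Or.inl h⟩
  by_cases hshortc : PathLengthLE Gᶜ 3
  · obtain ⟨u, v, h⟩ := exists_isDoubleStar_of_pathLengthLE_three hGc.preconnected
      (by rw [compl_compl]; exact hG.preconnected) hshortc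
    exact ⟨u, v, Or.inr h⟩
  · have := pc_add_pc_compl_le hG hGc hshort hshortc
    omega

/-- If `G` and its complement are both connected graphs on `n` vertices, then
`pc_{1,2}(G) + pc_{1,2}(Ḡ) = n + 2` if and only if `G` or `Ḡ` is isomorphic to a
double star `T(n₁,n₂)` with `n₁, n₂ ≥ 1`. -/
theorem pc_add_pc_compl_eq_iff {V : Type*} [Fintype V] (G : SimpleGraph V)
    (hG : G.Connected) (hGc : Gᶜ.Connected) :
    G.pc 2 + Gᶜ.pc 2 = Fintype.card V + 2 ↔
      ∃ n₁ n₂ : ℕ, 1 ≤ n₁ ∧ 1 ≤ n₂ ∧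
        (Nonempty (G ≃g doubleStar n₁ n₂) ∨ Nonempty (Gᶜ ≃g doubleStar n₁ n₂)) := by
  constructor
  · intro hsum
    obtain ⟨u, v, h | h⟩ := exists_isDoubleStar_of_pc_add_pc_compl_eq hG hGc hsum
    · obtain ⟨n₁, n₂, h₁, h₂, he⟩ := h.exists_iso_doubleStar
      exact ⟨n₁, n₂, h₁, h₂, Or.inl he⟩
    · obtain ⟨n₁, n₂, h₁, h₂, he⟩ := h.exists_iso_doubleStar
      exact ⟨n₁, n₂, h₁, h₂, Or.inr he⟩
  · rintro ⟨n₁, n₂, h₁, h₂, ⟨⟨e⟩⟩ | ⟨⟨e⟩⟩⟩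
    · exact ((isDoubleStar_doubleStar h₁ h₂).map_iso e.symm).pc_add_pc_compl hG hGc
    · have hGcc : Gᶜᶜ.Connected := by rwa [compl_compl]
      have hsum := ((isDoubleStar_doubleStar h₁ h₂).map_iso e.symm).pc_add_pc_compl hGc hGcc
      rwa [compl_compl, add_comm] at hsum
end

section
/- Let G be a graph on n vertices such that both G and its complement Ḡ are connected, and suppose G has a cut vertex u such that G − u has exactly two connected components, each with at least 2 vertices. Then pc_{1,2}(Ḡ) ≤ 4. -/
open SimpleGraph

/-!
Let `x` be a non-neighbour of `u`, let `A` be the component of `x` in `G - u` and let `B` be the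
union of the other components. In the complement every vertex of `A` is joined to every vertex of
`B`, and `u` is joined to `x`. Fix `p ∈ B` and colour an edge `ab` with `a ∈ A`, `b ∈ B` by the
pair of truth values of `a = x` and `b = p`. This blows up a rainbow 4-cycle `x p a b` by
replacing `a` and `b` with the classes `A \ {x}` and `B \ {p}`. Two vertices of the same class are
then joined by a path using each colour once, such as `a p x b a'`. Giving `ux` the colour of `xp`
also makes `u x b a p` rainbow. All the paths needed are rainbow, so they are distance `ℓ`-proper
for every `ℓ`.
-/

section RainbowColoring

variable {V α : Type*} {H : SimpleGraph V} {c : Sym2 V → α} {A B : Set V} {u v w x p : V}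

/-- Joined by a walk whose edges have pairwise distinct colours. Asking for walks rather than paths
loses nothing, since deleting cycles from a rainbow walk leaves a rainbow path. -/
def RainbowReachable (H : SimpleGraph V) (c : Sym2 V → α) (v w : V) : Prop :=
  ∃ q : H.Walk v w, (q.edges.map c).Nodup

theorem RainbowReachable.refl (v : V) : RainbowReachable H c v v :=
  ⟨.nil, by simp⟩

theorem RainbowReachable.of_adj (h : H.Adj v w) : RainbowReachable H c v w :=
  ⟨h.toWalk, by simp⟩

theorem RainbowReachable.symm (h : RainbowReachable H c v w) : RainbowReachable H c w v := by
  obtain ⟨q, hq⟩ := h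
  exact ⟨q.reverse, by simpa using hq⟩

theorem RainbowReachable.exists_isPath (h : RainbowReachable H c v w) :
    ∃ q : H.Walk v w, q.IsPath ∧ (q.edges.map c).Nodup := by
  classical
  obtain ⟨q, hq⟩ := h
  exact ⟨q.bypass, q.bypass_isPath, hq.sublist (q.edges_bypass_sublist_edges.map c)⟩

theorem isDistProper_of_nodup_map_edges {c : Sym2 V → ℕ} {q : H.Walk v w}
    (hq : (q.edges.map c).Nodup) (ℓ : ℕ) : q.IsDistProper ℓ c := by
  intro i j hi hj hij _ heq
  have : i = j := (hq.getElem_inj_iff (hi := by simpa using hi) (hj := by simpa using hj)).mp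
    (by simpa using heq)
  exact hij.ne this

theorem pc_le_of_forall_rainbowReachable {c : Sym2 V → ℕ} {k : ℕ} (hk : ∀ e ∈ H.edgeSet, c e < k)
    (hc : ∀ v w, RainbowReachable H c v w) (ℓ : ℕ) : H.pc ℓ ≤ k := by
  refine Nat.sInf_le ⟨c, hk, fun v w _ ↦ ?_⟩
  obtain ⟨q, hq, hnodup⟩ := (hc v w).exists_isPath
  exact ⟨q, hq, isDistProper_of_nodup_map_edges hnodup ℓ⟩

/-- `H` is complete between `A` and `B`, with the edges between them coloured as in the blow-up of a
rainbow 4-cycle: marking `x ∈ A` and `p ∈ B`, two such edges have the same colour exactly when they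
agree on having a marked end in `A` and on having a marked end in `B`. Specifying only which colours
coincide makes the notion symmetric under exchanging `(A, x)` and `(B, p)`. -/
structure IsCornerColoring (H : SimpleGraph V) (c : Sym2 V → α) (A B : Set V) (x p : V) : Prop where
  isCompleteBetween : H.IsCompleteBetween A B
  left_mem : x ∈ A
  right_mem : p ∈ B
  color_eq_iff : ∀ ⦃a⦄, a ∈ A → ∀ ⦃b⦄, b ∈ B → ∀ ⦃a'⦄, a' ∈ A → ∀ ⦃b'⦄, b' ∈ B →
    (c s(a, b) = c s(a', b') ↔ (a = x ↔ a' = x) ∧ (b = p ↔ b' = p))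

namespace IsCornerColoring

theorem symm (h : IsCornerColoring H c A B x p) : IsCornerColoring H c B A p x where
  isCompleteBetween := h.isCompleteBetween.symm
  left_mem := h.right_mem
  right_mem := h.left_mem
  color_eq_iff b hb a ha b' hb' a' ha' := by
    rw [Sym2.eq_swap, Sym2.eq_swap (a := b'), h.color_eq_iff ha hb ha' hb', and_comm]

theorem rainbowReachable_of_mem_left (h : IsCornerColoring H c A B x p) (hB : B.Nontrivial)
    (hv : v ∈ A) (hw : w ∈ A) : RainbowReachable H c v w := by
  have adj {a b} (ha : a ∈ A) (hb : b ∈ B) : H.Adj a b := h.isCompleteBetween ha hb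
  have hx := h.left_mem
  have hp := h.right_mem
  have of_marked {a} (ha : a ∈ A) : RainbowReachable H c x a := by
    obtain rfl | hax := eq_or_ne a x
    · exact .refl a
    · refine ⟨.cons (adj hx hp) (adj ha hp).symm.toWalk, ?_⟩
      simp [Sym2.eq_swap (a := p), h.color_eq_iff, *]
  by_cases hvx : v = x
  · exact hvx ▸ of_marked hw
  by_cases hwx : w = x
  · exact hwx ▸ (of_marked hv).symm
  · obtain ⟨b, hb, hbp⟩ := hB.exists_ne p
    refine ⟨.cons (adj hv hp) (.cons (adj hx hp).symm
      (.cons (adj hx hb) (adj hw hb).symm.toWalk)), ?_⟩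
    simp [Sym2.eq_swap (a := p), Sym2.eq_swap (a := b), h.color_eq_iff, *]

theorem rainbowReachable_of_mem_union (h : IsCornerColoring H c A B x p) (hA : A.Nontrivial)
    (hB : B.Nontrivial) (hv : v ∈ A ∪ B) (hw : w ∈ A ∪ B) : RainbowReachable H c v w := by
  rcases hv with hv | hv <;> rcases hw with hw | hw
  · exact h.rainbowReachable_of_mem_left hB hv hw
  · exact .of_adj (h.isCompleteBetween hv hw)
  · exact .of_adj (h.isCompleteBetween hw hv).symm
  · exact h.symm.rainbowReachable_of_mem_left hA hv hw

theorem rainbowReachable_pendant (h : IsCornerColoring H c A B x p) (hA : A.Nontrivial)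
    (hB : B.Nontrivial) (hux : H.Adj u x) (hc : c s(u, x) = c s(x, p)) (hw : w ∈ A ∪ B) :
    RainbowReachable H c u w := by
  have adj {a b} (ha : a ∈ A) (hb : b ∈ B) : H.Adj a b := h.isCompleteBetween ha hb
  have hx := h.left_mem
  have hp := h.right_mem
  obtain ⟨b, hb, hbp⟩ := hB.exists_ne p
  rcases hw with hw | hw
  · obtain rfl | hwx := eq_or_ne w x
    · exact .of_adj hux
    · refine ⟨.cons hux (.cons (adj hx hb) (adj hw hb).symm.toWalk), ?_⟩
      simp [Sym2.eq_swap (a := b), h.color_eq_iff, *]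
  · obtain rfl | hwp := eq_or_ne w p
    · obtain ⟨a, ha, hax⟩ := hA.exists_ne x
      refine ⟨.cons hux (.cons (adj hx hb) (.cons (adj ha hb).symm (adj ha hw).toWalk)), ?_⟩
      simp [Sym2.eq_swap (a := b), h.color_eq_iff, *]
    · refine ⟨.cons hux (adj hx hw).toWalk, ?_⟩
      simp [h.color_eq_iff, *]

theorem rainbowReachable (h : IsCornerColoring H c A B x p) (hA : A.Nontrivial) (hB : B.Nontrivial)
    (hux : H.Adj u x) (hc : c s(u, x) = c s(x, p)) (hAB : A ∪ B = {u}ᶜ) (v w : V) :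
    RainbowReachable H c v w := by
  have mem_union {a} (ha : a ≠ u) : a ∈ A ∪ B := hAB ▸ ha
  have of_pendant (a : V) : RainbowReachable H c u a := by
    obtain rfl | ha := eq_or_ne a u
    · exact .refl a
    · exact h.rainbowReachable_pendant hA hB hux hc (mem_union ha)
  by_cases hv : v = u
  · exact hv ▸ of_pendant w
  by_cases hw : w = u
  · exact hw ▸ (of_pendant v).symm
  · exact h.rainbowReachable_of_mem_union hA hB (mem_union hv) (mem_union hw)

end IsCornerColoring

section CornerColoring

variable [DecidableEq V]

/-- The four-colouring that realises `IsCornerColoring` for the marked vertices `x` and `p`, and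
gives the edge `ux` the colour of `xp`. -/
def cornerColoring (u x p : V) (e : Sym2 V) : ℕ :=
  if x ∈ e then if p ∈ e ∨ u ∈ e then 0 else 1 else if p ∈ e then 2 else 3

theorem cornerColoring_lt_four (u x p : V) (e : Sym2 V) : cornerColoring u x p e < 4 := by
  unfold cornerColoring
  split_ifs <;> decide

theorem cornerColoring_pendant (u x p : V) :
    cornerColoring u x p s(u, x) = cornerColoring u x p s(x, p) := by
  simp [cornerColoring]

theorem isCornerColoring_cornerColoring (hAB : H.IsCompleteBetween A B) (hu : u ∉ A ∪ B)
    (hx : x ∈ A) (hp : p ∈ B) : IsCornerColoring H (cornerColoring u x p) A B x p where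
  isCompleteBetween := hAB
  left_mem := hx
  right_mem := hp
  color_eq_iff a ha b hb a' ha' b' hb' := by
    have color_eq {a b} (ha : a ∈ A) (hb : b ∈ B) : cornerColoring u x p s(a, b) =
        if a = x then if b = p then 0 else 1 else if b = p then 2 else 3 := by
      have hbx : b ≠ x := (hAB hx hb).ne'
      have hap : a ≠ p := (hAB ha hp).ne
      have hua : u ≠ a := fun h ↦ hu (h ▸ .inl ha)
      have hub : u ≠ b := fun h ↦ hu (h ▸ .inr hb)
      simp [cornerColoring, eq_comm (a := x), eq_comm (a := p), *]
    rw [color_eq ha hb, color_eq ha' hb']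
    split_ifs <;> simp_all

end CornerColoring

theorem pc_le_four_of_isCompleteBetween (hAB : H.IsCompleteBetween A B) (hA : A.Nontrivial)
    (hB : B.Nontrivial) (hcover : A ∪ B = {u}ᶜ) (hx : x ∈ A) (hux : H.Adj u x) (ℓ : ℕ) :
    H.pc ℓ ≤ 4 := by
  classical
  obtain ⟨p, hp⟩ := hB.nonempty
  have h := isCornerColoring_cornerColoring hAB (u := u) (by simp [hcover]) hx hp
  exact pc_le_of_forall_rainbowReachable (fun e _ ↦ cornerColoring_lt_four u x p e)
    (h.rainbowReachable hA hB hux (cornerColoring_pendant u x p) hcover) ℓ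

end RainbowColoring

theorem compl_isCompleteBetween_supp_compl {V : Type*} {G : SimpleGraph V} {s : Set V}
    (C : (G.induce s).ConnectedComponent) :
    Gᶜ.IsCompleteBetween (Subtype.val '' C.supp) (Subtype.val '' C.suppᶜ) := by
  rintro _ ⟨a, ha, rfl⟩ _ ⟨b, hb, rfl⟩
  refine (G.compl_adj _ _).mpr ⟨fun h ↦ hb (Subtype.ext h ▸ ha), fun h ↦ hb ?_⟩
  exact (C.mem_supp_congr_adj (induce_adj.mpr h)).mp ha

theorem pc_compl_le_four_of_two_large_components_general {V : Type*} (G : SimpleGraph V)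
    (hGc : Gᶜ.Connected) (u : V) (hcut : Nontrivial (G.induce ({u}ᶜ : Set V)).ConnectedComponent)
    (hlarge : ∀ C : (G.induce ({u}ᶜ : Set V)).ConnectedComponent, C.supp.Nontrivial) (ℓ : ℕ) :
    Gᶜ.pc ℓ ≤ 4 := by
  obtain ⟨z⟩ : Nonempty ({u}ᶜ : Set V) := (hlarge hcut.to_nonempty.some).nonempty.to_type
  have : Nontrivial V := ⟨z, u, z.2⟩
  obtain ⟨x, hux⟩ := hGc.preconnected.exists_adj_of_nontrivial u
  let C := (G.induce ({u}ᶜ : Set V)).connectedComponentMk ⟨x, hux.ne'⟩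
  obtain ⟨D, hDC⟩ := exists_ne C
  have hD : D.supp ⊆ C.suppᶜ := fun b hb hbC ↦ hDC (hb.symm.trans hbC)
  have hcover : Subtype.val '' C.supp ∪ Subtype.val '' C.suppᶜ = {u}ᶜ := by simp
  exact pc_le_four_of_isCompleteBetween (compl_isCompleteBetween_supp_compl C)
    ((hlarge C).image Subtype.val_injective)
    (((hlarge D).mono hD).image Subtype.val_injective) hcover ⟨_, rfl, rfl⟩ hux ℓ

/-- If `G` and its complement are both connected and `G` has a cut vertex `u` such
that `G - u` has exactly two connected components, each with at least two vertices,
then `pc_{1,2}(Ḡ) ≤ 4`. -/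
theorem pc_compl_le_four_of_two_large_components {V : Type*} [Fintype V]
    (G : SimpleGraph V) (hG : G.Connected) (hGc : Gᶜ.Connected) (u : V)
    (hcut : Nat.card ((G.induce ({u}ᶜ : Set V)).ConnectedComponent) = 2)
    (hlarge : ∀ C : (G.induce ({u}ᶜ : Set V)).ConnectedComponent,
      2 ≤ Nat.card C.supp) :
    Gᶜ.pc 2 ≤ 4 := by
  have hnontrivial (C : (G.induce ({u}ᶜ : Set V)).ConnectedComponent) : C.supp.Nontrivial :=
    Set.nontrivial_coe_sort.mp (Finite.one_lt_card_iff_nontrivial.mp (hlarge C))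
  exact pc_compl_le_four_of_two_large_components_general G hGc u
    (Finite.one_lt_card_iff_nontrivial.mp (hcut ▸ one_lt_two)) hnontrivial 2
end
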